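/- Let Ω ⊆ ℝ^n be a bounded open set with Lipschitz boundary and s ∈ (0,1). A measurable set E ⊆ ℝ^n (normalized so that ∂E equals its measure-theoretic boundary) has finite s-perimeter in Ω, i.e. P_s(E,Ω) < ∞, if and only if there exist a sequence of open sets E_h ⊆ ℝ^n with smooth boundary and a sequence ε_h → 0⁺ such that: (i) E_h →loc E and sup_h P_s(E_h,Ω) < ∞; (ii) lim_{h→∞} P_s(E_h,Ω) = P_s(E,Ω); (iii) ∂E_h ∖ N_{ε_h}(∂Ω) ⊆ N_{ε_h}(∂E). -/

import Mathlib

open MeasureTheory Set Filter Topology Metric Bornology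
open scoped ENNReal NNReal symmDiff

noncomputable def Ls (n : ℕ) (s : ℝ) (A B : Set (EuclideanSpace ℝ (Fin n))) : ℝ≥0∞ :=
  ∫⁻ x in A, ∫⁻ y in B, ENNReal.ofReal (dist x y ^ (-((n : ℝ) + s)))

noncomputable def Ps (n : ℕ) (s : ℝ) (E Ω : Set (EuclideanSpace ℝ (Fin n))) : ℝ≥0∞ :=
  Ls n s (E ∩ Ω) (Eᶜ ∩ Ω) + Ls n s (E ∩ Ω) (Eᶜ \ Ω) + Ls n s (E \ Ω) (Eᶜ ∩ Ω)

def LocConv (n : ℕ) (A : ℕ → Set (EuclideanSpace ℝ (Fin n)))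
    (B : Set (EuclideanSpace ℝ (Fin n))) : Prop :=
  ∀ K : Set (EuclideanSpace ℝ (Fin n)), IsBounded K →
    Tendsto (fun h => volume ((A h ∆ B) ∩ K)) atTop (𝓝 0)

def HasSmoothBoundary {n : ℕ} (E : Set (EuclideanSpace ℝ (Fin n))) : Prop :=
  ∃ (f : EuclideanSpace ℝ (Fin n) → ℝ) (t : ℝ), ContDiff ℝ (⊤ : ℕ∞) f ∧
    (∀ x, f x = t → fderiv ℝ f x ≠ 0) ∧ E = {x | t < f x}

def HasLipschitzBoundary {n : ℕ} (Ω : Set (EuclideanSpace ℝ (Fin n))) : Prop :=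
  ∀ x ∈ frontier Ω, ∃ (U : Set (EuclideanSpace ℝ (Fin n)))
    (_ : IsOpen U) (_ : x ∈ U)
    (L : EuclideanSpace ℝ (Fin n) ≃ₗᵢ[ℝ] WithLp 2 (EuclideanSpace ℝ (Fin (n - 1)) × ℝ))
    (φ : EuclideanSpace ℝ (Fin (n - 1)) → ℝ) (K : NNReal),
    LipschitzWith K φ ∧
    Ω ∩ U = {y ∈ U | φ (WithLp.equiv 2 _ (L y)).1 < (WithLp.equiv 2 _ (L y)).2} ∧
    frontier Ω ∩ U = {y ∈ U | φ (WithLp.equiv 2 _ (L y)).1 = (WithLp.equiv 2 _ (L y)).2}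

def mtBoundary {n : ℕ} (E : Set (EuclideanSpace ℝ (Fin n))) : Set (EuclideanSpace ℝ (Fin n)) :=
  {x | ∀ r > 0, 0 < volume (E ∩ Metric.ball x r) ∧
    volume (E ∩ Metric.ball x r) < volume (Metric.ball x r)}


lemma preconn_frontier {X : Type*} [TopologicalSpace X] {S Ω : Set X} (hS : IsPreconnected S)
    (h1 : (S ∩ Ω).Nonempty) (h2 : (S \ Ω).Nonempty) : (S ∩ frontier Ω).Nonempty := by
  by_contra hne
  rw [Set.not_nonempty_iff_eq_empty] at hne
  have hcov : S ⊆ interior Ω ∪ interior Ωᶜ := by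
    intro x hx
    by_contra hx'
    have : x ∈ frontier Ω := by
      rw [Set.mem_union, not_or] at hx'
      rw [interior_compl] at hx'
      exact ⟨by simpa using hx'.2, hx'.1⟩
    have : x ∈ S ∩ frontier Ω := ⟨hx, this⟩
    rw [hne] at this
    exact this
  obtain ⟨a, haS, haΩ⟩ := h1
  obtain ⟨b, hbS, hbΩ⟩ := h2
  have ha : a ∈ interior Ω := by
    rcases hcov haS with h | h
    · exact h
    · exact absurd haΩ (interior_subset h)
  have hb : b ∈ interior Ωᶜ := by
    rcases hcov hbS with h | h
    · exact absurd (interior_subset h) hbΩ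
    · exact h
  obtain ⟨c, hc, hc1, hc2⟩ := hS _ _ isOpen_interior isOpen_interior hcov ⟨a, haS, ha⟩ ⟨b, hbS, hb⟩
  exact (interior_subset hc2) (interior_subset hc1)

lemma seg_frontier {X : Type*} [NormedAddCommGroup X] [NormedSpace ℝ X] {Ω : Set X} {a b : X}
    (ha : a ∈ Ω) (hb : b ∉ Ω) :
    ∃ p ∈ frontier Ω, dist a p ≤ dist a b ∧ dist b p ≤ dist a b := by
  obtain ⟨p, hp, hpf⟩ := preconn_frontier (convex_segment a b).isPreconnected
    ⟨a, left_mem_segment ℝ a b, ha⟩ ⟨b, right_mem_segment ℝ a b, hb⟩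
  refine ⟨p, hpf, ?_, ?_⟩
  · have := dist_add_dist_of_mem_segment hp
    linarith [dist_nonneg (x := p) (y := b)]
  · have := dist_add_dist_of_mem_segment hp
    rw [dist_comm b p]
    linarith [dist_nonneg (x := a) (y := p)]

lemma mink_local {n : ℕ} (Ω : Set (EuclideanSpace ℝ (Fin n))) (hΩlip : HasLipschitzBoundary Ω)
    (x : EuclideanSpace ℝ (Fin n)) (hx : x ∈ frontier Ω) :
    ∃ r : ℝ, 0 < r ∧ ∃ C : ℝ, 0 ≤ C ∧ ∀ δ : ℝ, 0 < δ → δ ≤ 1 →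
      volume (thickening δ (frontier Ω ∩ ball x r)) ≤ ENNReal.ofReal (C * δ) := by
  obtain ⟨U, hU, hxU, L, φ, K, hφ, -, hfr⟩ := hΩlip x hx
  obtain ⟨r, hr, hrU⟩ := Metric.isOpen_iff.1 hU x hxU
  set Φ : EuclideanSpace ℝ (Fin n) → EuclideanSpace ℝ (Fin (n-1)) × ℝ :=
    fun y => WithLp.ofLp (L y) with hΦ
  have hmp : MeasurePreserving Φ :=
    (WithLp.volume_preserving_ofLp _ _).comp L.measurePreserving
  have h1 : ∀ y z, dist (Φ y).1 (Φ z).1 ≤ dist y z := by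
    intro y z
    rw [← L.dist_map y z]
    have := WithLp.prod_dist_eq_of_L2 (L y) (L z)
    rw [this]
    apply Real.le_sqrt_of_sq_le
    have : 0 ≤ dist (L y).snd (L z).snd ^ 2 := by positivity
    simp only [hΦ]
    exact le_add_of_nonneg_right this
  have h2 : ∀ y z, dist (Φ y).2 (Φ z).2 ≤ dist y z := by
    intro y z
    rw [← L.dist_map y z]
    have := WithLp.prod_dist_eq_of_L2 (L y) (L z)
    rw [this]
    apply Real.le_sqrt_of_sq_le
    have : 0 ≤ dist (L y).fst (L z).fst ^ 2 := by positivity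
    simp only [hΦ]
    exact le_add_of_nonneg_left this
  set B := closedBall (Φ x).1 (r + 1)
  refine ⟨r, hr, (volume B).toReal * (2 * (1 + K)), by positivity, fun δ hδ hδ1 => ?_⟩
  set S : Set (EuclideanSpace ℝ (Fin (n-1)) × ℝ) :=
    {q | q.1 ∈ B ∧ |q.2 - φ q.1| ≤ (1 + K) * δ} with hS
  have hSc : IsClosed S := by
    apply IsClosed.inter
    · exact isClosed_closedBall.preimage continuous_fst
    · have := hφ.continuous
      have h3 : Continuous (fun q : EuclideanSpace ℝ (Fin (n-1)) × ℝ => |q.2 - φ q.1|) := by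
        fun_prop
      exact isClosed_le h3 continuous_const
  have hsub : thickening δ (frontier Ω ∩ ball x r) ⊆ Φ ⁻¹' S := by
    intro y hy
    obtain ⟨p, ⟨hpf, hpb⟩, hyp⟩ := mem_thickening_iff.1 hy
    have hp : p ∈ frontier Ω ∩ U := ⟨hpf, hrU hpb⟩
    rw [hfr] at hp
    have hp2 : φ (Φ p).1 = (Φ p).2 := hp.2
    constructor
    · rw [mem_closedBall]
      have := h1 y x
      have h3 := dist_triangle y p x
      rw [mem_ball] at hpb
      linarith
    · have a1 := h2 y p
      have a2 := h1 y p
      have a3 := hφ.dist_le_mul (Φ y).1 (Φ p).1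
      rw [Real.dist_eq] at a1 a3
      rw [hp2] at a3
      have a4 : |(Φ y).2 - φ (Φ y).1| ≤ |(Φ y).2 - (Φ p).2| + |φ (Φ y).1 - (Φ p).2| := by
        rw [abs_sub_comm (φ (Φ y).1)]
        exact abs_sub_le _ _ _
      have a5 : (K : ℝ) * dist (Φ y).1 (Φ p).1 ≤ K * δ := by
        gcongr; linarith
      show |(Φ y).2 - φ (Φ y).1| ≤ _
      nlinarith
  calc volume (thickening δ (frontier Ω ∩ ball x r)) ≤ volume (Φ ⁻¹' S) := measure_mono hsub
    _ = volume S := hmp.measure_preimage hSc.measurableSet.nullMeasurableSet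
    _ = ∫⁻ a, volume (Prod.mk a ⁻¹' S) := by
        rw [Measure.volume_eq_prod, Measure.prod_apply hSc.measurableSet]
    _ ≤ ∫⁻ a, B.indicator (fun _ => ENNReal.ofReal (2 * (1 + K) * δ)) a := by
        apply lintegral_mono
        intro a
        by_cases ha : a ∈ B
        · simp only [indicator_of_mem ha]
          have : Prod.mk a ⁻¹' S ⊆ Icc (φ a - (1 + K) * δ) (φ a + (1 + K) * δ) := by
            intro b hb
            have := abs_le.1 hb.2
            simp only at this
            constructor <;> linarith [this.1, this.2]
          refine (measure_mono this).trans ?_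
          rw [Real.volume_Icc]
          apply ENNReal.ofReal_le_ofReal
          linarith
        · have : Prod.mk a ⁻¹' S = ∅ := by
            ext b; simp [hS, ha]
          simp [this]
    _ = ENNReal.ofReal ((volume B).toReal * (2 * (1 + K)) * δ) := by
        rw [lintegral_indicator_const measurableSet_closedBall, mul_assoc (volume B).toReal,
          ENNReal.ofReal_mul (p := (volume B).toReal) ENNReal.toReal_nonneg,
          ENNReal.ofReal_toReal measure_closedBall_lt_top.ne, mul_comm]

theorem mink {n : ℕ} (Ω : Set (EuclideanSpace ℝ (Fin n))) (hΩb : IsBounded Ω)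
    (hΩlip : HasLipschitzBoundary Ω) :
    ∃ C : ℝ, 0 ≤ C ∧ ∀ δ : ℝ, 0 < δ → δ ≤ 1 →
      volume (thickening δ (frontier Ω)) ≤ ENNReal.ofReal (C * δ) := by
  have hc : IsCompact (frontier Ω) :=
    Metric.isCompact_of_isClosed_isBounded isClosed_frontier
      (hΩb.closure.subset frontier_subset_closure)
  refine hc.induction_on (p := fun A => ∃ C : ℝ, 0 ≤ C ∧ ∀ δ : ℝ, 0 < δ → δ ≤ 1 →
      volume (thickening δ A) ≤ ENNReal.ofReal (C * δ)) ?_ ?_ ?_ ?_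
  · exact ⟨0, le_rfl, by simp⟩
  · rintro A B hAB ⟨C, hC, h⟩
    exact ⟨C, hC, fun δ h1 h2 => (measure_mono (thickening_subset_of_subset _ hAB)).trans (h δ h1 h2)⟩
  · rintro A B ⟨C, hC, h⟩ ⟨C', hC', h'⟩
    refine ⟨C + C', by positivity, fun δ h1 h2 => ?_⟩
    rw [thickening_union, add_mul, ENNReal.ofReal_add (by positivity) (by positivity)]
    exact (measure_union_le _ _).trans (add_le_add (h δ h1 h2) (h' δ h1 h2))
  · intro x hx
    obtain ⟨r, hr, hC⟩ := mink_local Ω hΩlip x hx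
    exact ⟨frontier Ω ∩ ball x r,
      inter_mem_nhdsWithin _ (ball_mem_nhds x hr), hC⟩

lemma frontier_null {n : ℕ} (Ω : Set (EuclideanSpace ℝ (Fin n))) {C : ℝ}
    (h : ∀ δ : ℝ, 0 < δ → δ ≤ 1 →
      volume (thickening δ (frontier Ω)) ≤ ENNReal.ofReal (C * δ)) : volume (frontier Ω) = 0 := by
  have h1 : Tendsto (fun δ : ℝ => ENNReal.ofReal (C * δ)) (𝓝[>] 0) (𝓝 0) := by
    have : Tendsto (fun δ : ℝ => ENNReal.ofReal (C * δ)) (𝓝 0) (𝓝 (ENNReal.ofReal (C * 0))) := by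
      apply ENNReal.tendsto_ofReal
      exact tendsto_id.const_mul C
    simp only [mul_zero, ENNReal.ofReal_zero] at this
    exact this.mono_left nhdsWithin_le_nhds
  have h2 : volume (frontier Ω) ≤ 0 := by
    apply ge_of_tendsto h1
    filter_upwards [Ioc_mem_nhdsGT (zero_lt_one' ℝ)] with δ hδ
    exact (measure_mono (self_subset_thickening hδ.1 _)).trans (h δ hδ.1 hδ.2)
  simpa using h2


noncomputable def Jf (n : ℕ) (s : ℝ) (Ω : Set (EuclideanSpace ℝ (Fin n)))
    (f : EuclideanSpace ℝ (Fin n) → ℝ) : ℝ≥0∞ :=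
  ∫⁻ x in Ω, ∫⁻ y in Ω, ENNReal.ofReal (f x - f y) * ENNReal.ofReal (dist x y ^ (-((n : ℝ) + s)))

lemma near_int {n : ℕ} (hn : 1 ≤ n) {β : ℝ} (hβ : -(n : ℝ) < β) (R : ℝ) :
    ∫⁻ h in ball (0 : EuclideanSpace ℝ (Fin n)) R, ENNReal.ofReal (‖h‖ ^ β) < ⊤ := by
  have : Nonempty (Fin n) := ⟨⟨0, hn⟩⟩
  have h1 : IntegrableOn (fun h : EuclideanSpace ℝ (Fin n) => (fun r : ℝ => r ^ β) ‖h‖)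
      (ball 0 R) volume := by
    rw [integrableOn_fun_norm_addHaar volume (f := fun r : ℝ => r ^ β)]
    have h2 : IntegrableOn (fun y : ℝ => y ^ ((n : ℝ) - 1 + β)) (Ioo 0 R) := by
      rcases le_or_gt R 0 with hR | hR
      · simp [Ioo_eq_empty (not_lt.2 hR)]
      · rw [intervalIntegral.integrableOn_Ioo_rpow_iff hR]
        linarith
    refine h2.congr_fun ?_ measurableSet_Ioo
    intro y hy
    simp only [finrank_euclideanSpace, Fintype.card_fin, smul_eq_mul]
    rw [Real.rpow_add hy.1, ← Real.rpow_natCast]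
    push_cast [Nat.cast_sub hn]
    rfl
  exact h1.lintegral_lt_top

lemma far_int {n : ℕ} (hn : 1 ≤ n) {β : ℝ} (hβ : β < -(n : ℝ)) {R : ℝ} (hR : 0 < R) :
    ∫⁻ h in (ball (0 : EuclideanSpace ℝ (Fin n)) R)ᶜ, ENNReal.ofReal (‖h‖ ^ β) < ⊤ := by
  have : Nonempty (Fin n) := ⟨⟨0, hn⟩⟩
  have h1 : Integrable (fun h : EuclideanSpace ℝ (Fin n) =>
      ((Ici R).indicator (fun r : ℝ => r ^ β)) ‖h‖) volume := by
    rw [integrable_fun_norm_addHaar]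
    have h2 : IntegrableOn (fun y : ℝ => y ^ ((n : ℝ) - 1 + β)) (Ici R) := by
      rw [integrableOn_Ici_iff_integrableOn_Ioi]
      exact integrableOn_Ioi_rpow_of_lt (by linarith) hR
    have h3 := (h2.integrable_indicator measurableSet_Ici).integrableOn (s := Ioi 0)
    refine h3.congr_fun ?_ measurableSet_Ioi
    intro y hy
    simp only [finrank_euclideanSpace, Fintype.card_fin, smul_eq_mul, indicator]
    split_ifs
    · rw [Real.rpow_add hy, ← Real.rpow_natCast]
      push_cast [Nat.cast_sub hn]
      rfl
    · simp
  have h2 := h1.lintegral_lt_top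
  refine lt_of_eq_of_lt ?_ h2
  rw [← lintegral_indicator measurableSet_ball.compl]
  congr 1
  ext h
  by_cases hh : R ≤ ‖h‖
  · simp [indicator, hh]
  · simp [indicator, hh]

lemma ker_meas (n : ℕ) (β : ℝ) :
    Measurable (fun p : EuclideanSpace ℝ (Fin n) × EuclideanSpace ℝ (Fin n) =>
      ENNReal.ofReal (dist p.1 p.2 ^ β)) := by
  fun_prop

theorem Ls_compl_lt_top {n : ℕ} (hn : 1 ≤ n) {s : ℝ} (hs : s ∈ Set.Ioo (0 : ℝ) 1)
    (Ω : Set (EuclideanSpace ℝ (Fin n))) (hΩo : IsOpen Ω) (hΩb : IsBounded Ω)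
    {C : ℝ} (hC : 0 ≤ C) (hmink : ∀ δ : ℝ, 0 < δ → δ ≤ 1 →
      volume (thickening δ (frontier Ω)) ≤ ENNReal.ofReal (C * δ)) :
    Ls n s Ω Ωᶜ < ⊤ := by
  set k : EuclideanSpace ℝ (Fin n) → ℝ≥0∞ := fun h => ENNReal.ofReal (‖h‖ ^ (-((n : ℝ) + s))) with hk
  have hkm : Measurable k := by fun_prop
  have hΩm := hΩo.measurableSet
  set o : EuclideanSpace ℝ (Fin n) → ℝ≥0∞ := Ω.indicator 1 with ho
  have hom : Measurable o := measurable_one.indicator hΩm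
  set o' : EuclideanSpace ℝ (Fin n) → ℝ≥0∞ := Ωᶜ.indicator 1 with ho'
  have hom' : Measurable o' := measurable_one.indicator hΩm.compl
  have e1 : Ls n s Ω Ωᶜ = ∫⁻ h, ∫⁻ x, o x * (o' (x - h) * k h) := by
    have : Ls n s Ω Ωᶜ = ∫⁻ x, ∫⁻ h, o x * (o' (x - h) * k h) := by
      unfold Ls
      rw [← lintegral_indicator hΩm]
      congr 1
      ext x
      by_cases hx : x ∈ Ω
      · simp only [indicator_of_mem hx, ho, Pi.one_apply, one_mul]
        rw [← lintegral_indicator hΩm.compl, ← lintegral_sub_left_eq_self _ x]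
        congr 1
        ext h
        by_cases hh : x - h ∈ Ωᶜ
        · simp [indicator_of_mem hh, ho', hk]
        · simp [indicator_of_notMem hh, ho']
      · simp [indicator_of_notMem hx, ho]
    rw [this, lintegral_lintegral_swap]
    fun_prop
  rw [e1, ← lintegral_add_compl _ (measurableSet_ball (x := (0 : EuclideanSpace ℝ (Fin n))) (ε := 1/2))]
  apply ENNReal.add_lt_top.2
  constructor
  · have b1 : ∀ h ∈ ball (0 : EuclideanSpace ℝ (Fin n)) (1/2), ∫⁻ x, o x * (o' (x - h) * k h) ≤
        ENNReal.ofReal (C * 2) * ENNReal.ofReal (‖h‖ ^ (1 - (n : ℝ) - s)) := by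
      intro h hh
      rw [mem_ball_zero_iff] at hh
      by_cases h0 : h = 0
      · have : ∀ x, o x * (o' (x - h) * k h) = 0 := by
          intro x
          by_cases hx : x ∈ Ω <;> simp [h0, ho, ho', hx]
        simp [this]
      have hpos : 0 < ‖h‖ := norm_pos_iff.2 h0
      calc ∫⁻ x, o x * (o' (x - h) * k h)
          ≤ ∫⁻ x, (thickening (2 * ‖h‖) (frontier Ω)).indicator (fun _ => k h) x := by
            apply lintegral_mono
            intro x
            by_cases hx : x ∈ Ω
            · by_cases hx' : x - h ∈ Ω
              · simp [ho', hx']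
              · obtain ⟨p, hp, hp1, -⟩ := seg_frontier hx hx'
                have : x ∈ thickening (2 * ‖h‖) (frontier Ω) := by
                  rw [mem_thickening_iff]
                  refine ⟨p, hp, ?_⟩
                  have : dist x (x - h) = ‖h‖ := by simp
                  linarith
                simp [ho, ho', hx, hx', this]
            · simp [ho, hx]
        _ = k h * volume (thickening (2 * ‖h‖) (frontier Ω)) := by
            rw [lintegral_indicator_const isOpen_thickening.measurableSet]
        _ ≤ k h * ENNReal.ofReal (C * (2 * ‖h‖)) := by
            gcongr
            exact hmink _ (by positivity) (by linarith)
        _ = _ := by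
            rw [hk]
            simp only
            rw [← ENNReal.ofReal_mul (by positivity), ← ENNReal.ofReal_mul (by positivity)]
            congr 1
            have : (1 - (n : ℝ) - s) = -((n : ℝ) + s) + 1 := by ring
            rw [this, Real.rpow_add hpos, Real.rpow_one]
            ring
    refine (setLIntegral_mono' measurableSet_ball b1).trans_lt ?_
    rw [lintegral_const_mul _ (by fun_prop)]
    apply ENNReal.mul_lt_top ENNReal.ofReal_lt_top
    exact near_int hn (by linarith [hs.2]) _
  · have b1 : ∀ h, ∫⁻ x, o x * (o' (x - h) * k h) ≤ volume Ω * k h := by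
      intro h
      calc ∫⁻ x, o x * (o' (x - h) * k h) ≤ ∫⁻ x, Ω.indicator (fun _ => k h) x := by
            apply lintegral_mono
            intro x
            by_cases hx : x ∈ Ω
            · by_cases hx' : x - h ∈ Ω
              · simp [ho', hx']
              · simp [ho, ho', hx, hx']
            · simp [ho, hx]
        _ = _ := by rw [lintegral_indicator_const hΩm, mul_comm]
    refine (lintegral_mono b1).trans_lt ?_
    rw [lintegral_const_mul _ hkm]
    apply ENNReal.mul_lt_top hΩb.measure_lt_top
    exact far_int hn (by linarith [hs.1]) (by norm_num)

/-- Hölder type bound for the seminorm. -/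
theorem Jf_holder {n : ℕ} {s : ℝ}
    (Ω : Set (EuclideanSpace ℝ (Fin n))) (hΩo : IsOpen Ω) {R : ℝ}
    (hR : ∀ x ∈ Ω, ∀ y ∈ Ω, dist x y < R) {f : EuclideanSpace ℝ (Fin n) → ℝ} {M σ : ℝ}
    (hM : 0 ≤ M) (hf : ∀ x ∈ Ω, ∀ y ∈ Ω, f x - f y ≤ M * dist x y ^ σ)
    {N : Set (EuclideanSpace ℝ (Fin n))} (hN : MeasurableSet N)
    (hfN : ∀ x ∈ Ω, ∀ y ∈ Ω, x ∉ N → y ∉ N → f x ≤ f y) :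
    Jf n s Ω f ≤ ENNReal.ofReal M * (2 * volume N *
      ∫⁻ h in ball (0 : EuclideanSpace ℝ (Fin n)) R, ENNReal.ofReal (‖h‖ ^ (σ - ((n : ℝ) + s)))) := by
  have hΩm := hΩo.measurableSet
  set k : EuclideanSpace ℝ (Fin n) → ℝ≥0∞ := (ball 0 R).indicator
    (fun h => ENNReal.ofReal (‖h‖ ^ (σ - ((n : ℝ) + s)))) with hk
  have hkm : Measurable k := by
    apply Measurable.indicator _ measurableSet_ball
    fun_prop
  set o : EuclideanSpace ℝ (Fin n) → ℝ≥0∞ := N.indicator 1 with ho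
  have hom : Measurable o := measurable_one.indicator hN
  rw [← lintegral_indicator measurableSet_ball, ← hk]
  have pt : ∀ x ∈ Ω, ∀ y ∈ Ω, ENNReal.ofReal (f x - f y) *
      ENNReal.ofReal (dist x y ^ (-((n : ℝ) + s))) ≤
      ENNReal.ofReal M * (o x * k (x - y) + o y * k (x - y)) := by
    intro x hx y hy
    by_cases hxy : x = y
    · simp [hxy]
    have hpos : 0 < dist x y := dist_pos.2 hxy
    by_cases hor : x ∈ N ∨ y ∈ N
    · have h1 : (1 : ℝ≥0∞) ≤ o x + o y := by
        rcases hor with h | h <;> simp [ho, h]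
      have h2 : k (x - y) = ENNReal.ofReal (dist x y ^ (σ - ((n : ℝ) + s))) := by
        have : x - y ∈ ball (0 : EuclideanSpace ℝ (Fin n)) R := by
          rw [mem_ball_zero_iff, ← dist_eq_norm]; exact hR x hx y hy
        rw [hk, indicator_of_mem this, dist_eq_norm]
      rw [← add_mul, h2]
      calc _ ≤ ENNReal.ofReal (M * dist x y ^ σ) * ENNReal.ofReal (dist x y ^ (-((n : ℝ) + s))) := by
            gcongr; exact hf x hx y hy
        _ = ENNReal.ofReal M * (1 * ENNReal.ofReal (dist x y ^ (σ - ((n : ℝ) + s)))) := by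
            rw [sub_eq_add_neg, Real.rpow_add hpos, one_mul, ENNReal.ofReal_mul hM,
              ENNReal.ofReal_mul (by positivity), mul_assoc]
        _ ≤ _ := by gcongr
    · rw [not_or] at hor
      have := hfN x hx y hy hor.1 hor.2
      rw [ENNReal.ofReal_of_nonpos (by linarith)]
      simp
  have hm1 : Measurable (fun p : EuclideanSpace ℝ (Fin n) × EuclideanSpace ℝ (Fin n) =>
    o p.1 * k (p.1 - p.2)) := by fun_prop
  have hm2 : Measurable (fun p : EuclideanSpace ℝ (Fin n) × EuclideanSpace ℝ (Fin n) =>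
    o p.2 * k (p.1 - p.2)) := by fun_prop
  have i1 : ∫⁻ x, ∫⁻ y, o x * k (x - y) = volume N * ∫⁻ h, k h := by
    have : ∀ x, ∫⁻ y, o x * k (x - y) = o x * ∫⁻ h, k h := by
      intro x
      rw [lintegral_const_mul _ (by fun_prop), lintegral_sub_left_eq_self]
    simp_rw [this]
    rw [lintegral_mul_const _ hom, ho, lintegral_indicator_one hN]
  have i2 : ∫⁻ x, ∫⁻ y, o y * k (x - y) = volume N * ∫⁻ h, k h := by
    rw [lintegral_lintegral_swap hm2.aemeasurable]
    have : ∀ y, ∫⁻ x, o y * k (x - y) = o y * ∫⁻ h, k h := by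
      intro x
      rw [lintegral_const_mul _ (by fun_prop), lintegral_sub_right_eq_self]
    simp_rw [this]
    rw [lintegral_mul_const _ hom, ho, lintegral_indicator_one hN]
  calc Jf n s Ω f ≤ ∫⁻ x in Ω, ∫⁻ y in Ω, ENNReal.ofReal M * (o x * k (x - y) + o y * k (x - y)) := by
        unfold Jf
        apply setLIntegral_mono' hΩm
        intro x hx
        exact setLIntegral_mono' hΩm (fun y hy => pt x hx y hy)
    _ ≤ ∫⁻ x, ∫⁻ y, ENNReal.ofReal M * (o x * k (x - y) + o y * k (x - y)) :=
        (setLIntegral_le_lintegral _ _).trans (lintegral_mono fun x => setLIntegral_le_lintegral _ _)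
    _ = ENNReal.ofReal M * ∫⁻ x, (∫⁻ y, o x * k (x - y)) + (∫⁻ y, o y * k (x - y)) := by
        rw [← lintegral_const_mul]
        · congr 1
          ext x
          rw [lintegral_const_mul _ (by fun_prop), lintegral_add_left (by fun_prop)]
        · exact (Measurable.lintegral_prod_right' hm1).add (Measurable.lintegral_prod_right' hm2)
    _ = ENNReal.ofReal M * (2 * volume N * ∫⁻ h, k h) := by
        rw [lintegral_add_left (Measurable.lintegral_prod_right' hm1), i1, i2]
        ring


lemma Ls_prod {n : ℕ} {s : ℝ} {A B : Set (EuclideanSpace ℝ (Fin n))}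
    (hA : MeasurableSet A) (hB : MeasurableSet B) :
    Ls n s A B = ∫⁻ p : EuclideanSpace ℝ (Fin n) × EuclideanSpace ℝ (Fin n),
      (A ×ˢ B).indicator (fun p => ENNReal.ofReal (dist p.1 p.2 ^ (-((n : ℝ) + s)))) p := by
  rw [lintegral_indicator (hA.prod hB), Measure.volume_eq_prod, setLIntegral_prod]
  · rfl
  · exact (ker_meas n _).aemeasurable

lemma Ls_inter {n : ℕ} {s : ℝ} {A B Ω : Set (EuclideanSpace ℝ (Fin n))}
    (hA : MeasurableSet A) (hB : MeasurableSet B) :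
    Ls n s (A ∩ Ω) (B ∩ Ω) = ∫⁻ x in Ω, ∫⁻ y in Ω, A.indicator 1 x * B.indicator 1 y *
      ENNReal.ofReal (dist x y ^ (-((n : ℝ) + s))) := by
  unfold Ls
  rw [← Measure.restrict_restrict hA, ← Measure.restrict_restrict hB, ← lintegral_indicator hA]
  congr 1
  ext x
  by_cases hx : x ∈ A
  · simp only [indicator_of_mem hx, Pi.one_apply, one_mul]
    rw [← lintegral_indicator hB]
    congr 1
    ext y
    by_cases hy : y ∈ B <;> simp [hy]
  · simp [hx]

theorem coarea_le {n : ℕ} {s : ℝ} {Ω : Set (EuclideanSpace ℝ (Fin n))}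
    {v : EuclideanSpace ℝ (Fin n) → ℝ} (hv : Measurable v) :
    ∫⁻ t in Ioo (0 : ℝ) 1, Ls n s ({x | t < v x} ∩ Ω) ({x | t < v x}ᶜ ∩ Ω) ≤ Jf n s Ω v := by
  set a : EuclideanSpace ℝ (Fin n) → ℝ → ℝ≥0∞ := fun x t => {x | t < v x}.indicator 1 x with ha
  set b : EuclideanSpace ℝ (Fin n) → ℝ → ℝ≥0∞ := fun x t => {x | t < v x}ᶜ.indicator 1 x with hb
  have hS : MeasurableSet {p : EuclideanSpace ℝ (Fin n) × ℝ | p.2 < v p.1} :=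
    measurableSet_lt (by fun_prop) (by fun_prop)
  have ham : Measurable (fun p : EuclideanSpace ℝ (Fin n) × ℝ => a p.1 p.2) :=
    (measurable_one.indicator hS : Measurable
      ({p : EuclideanSpace ℝ (Fin n) × ℝ | p.2 < v p.1}.indicator (1 : EuclideanSpace ℝ (Fin n) × ℝ → ℝ≥0∞)))
  have hbm : Measurable (fun p : EuclideanSpace ℝ (Fin n) × ℝ => b p.1 p.2) :=
    (measurable_one.indicator hS.compl : Measurable
      ({p : EuclideanSpace ℝ (Fin n) × ℝ | p.2 < v p.1}ᶜ.indicator (1 : EuclideanSpace ℝ (Fin n) × ℝ → ℝ≥0∞)))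
  have hkm := ker_meas n (-((n : ℝ) + s))
  have hset : ∀ t, MeasurableSet {x | t < v x} := fun t => measurableSet_lt measurable_const hv
  calc ∫⁻ t in Ioo (0 : ℝ) 1, Ls n s ({x | t < v x} ∩ Ω) ({x | t < v x}ᶜ ∩ Ω)
      = ∫⁻ t in Ioo (0 : ℝ) 1, ∫⁻ x in Ω, ∫⁻ y in Ω, a x t * b y t *
        ENNReal.ofReal (dist x y ^ (-((n : ℝ) + s))) := by
        congr 1
        ext t
        rw [Ls_inter (hset t) (hset t).compl]
    _ ≤ ∫⁻ t, ∫⁻ x in Ω, ∫⁻ y in Ω, a x t * b y t *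
        ENNReal.ofReal (dist x y ^ (-((n : ℝ) + s))) := setLIntegral_le_lintegral _ _
    _ = ∫⁻ x in Ω, ∫⁻ t, ∫⁻ y in Ω, a x t * b y t *
        ENNReal.ofReal (dist x y ^ (-((n : ℝ) + s))) := by
        rw [lintegral_lintegral_swap]
        apply Measurable.aemeasurable
        apply Measurable.lintegral_prod_right' (f := fun q : (ℝ × EuclideanSpace ℝ (Fin n)) ×
          EuclideanSpace ℝ (Fin n) => a q.1.2 q.1.1 * b q.2 q.1.1 *
          ENNReal.ofReal (dist q.1.2 q.2 ^ (-((n : ℝ) + s))))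
        have h1 := ham.comp (f := fun q : (ℝ × EuclideanSpace ℝ (Fin n)) ×
          EuclideanSpace ℝ (Fin n) => (q.1.2, q.1.1)) (by fun_prop)
        have h2 := hbm.comp (f := fun q : (ℝ × EuclideanSpace ℝ (Fin n)) ×
          EuclideanSpace ℝ (Fin n) => (q.2, q.1.1)) (by fun_prop)
        exact (h1.mul h2).mul (by fun_prop)
    _ = ∫⁻ x in Ω, ∫⁻ y in Ω, ∫⁻ t, a x t * b y t *
        ENNReal.ofReal (dist x y ^ (-((n : ℝ) + s))) := by
        congr 1
        ext x
        rw [lintegral_lintegral_swap]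
        apply Measurable.aemeasurable
        have h1 := ham.comp (f := fun q : ℝ × EuclideanSpace ℝ (Fin n) => (x, q.1)) (by fun_prop)
        have h2 := hbm.comp (f := fun q : ℝ × EuclideanSpace ℝ (Fin n) => (q.2, q.1)) (by fun_prop)
        exact (h1.mul h2).mul (by fun_prop)
    _ ≤ Jf n s Ω v := by
        unfold Jf
        apply lintegral_mono
        intro x
        apply lintegral_mono
        intro y
        simp only
        have h1 := ham.comp (f := fun t : ℝ => (x, t)) (by fun_prop)
        have h2 := hbm.comp (f := fun t : ℝ => (y, t)) (by fun_prop)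
        have h3 : Measurable (fun t => a x t * b y t) := h1.mul h2
        rw [lintegral_mul_const _ h3]
        gcongr
        have : ∀ t, a x t * b y t = (Ico (v y) (v x)).indicator 1 t := by
          intro t
          by_cases h1 : t < v x <;> by_cases h2 : t < v y
          · simp [ha, hb, h1, h2, indicator]
          · simp [ha, hb, h1, h2, indicator, not_lt.1 h2]
          · simp [ha, hb, h1, h2, indicator]
          · simp [ha, hb, h1, h2, indicator]
        simp_rw [this]
        rw [lintegral_indicator_one measurableSet_Ico, Real.volume_Ico]

open scoped Convolution in
theorem Jf_mollify {n : ℕ} {s : ℝ} (hs : 0 < s)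
    (Ω : Set (EuclideanSpace ℝ (Fin n))) (hΩo : IsOpen Ω)
    {w : EuclideanSpace ℝ (Fin n) → ℝ} (hw : Measurable w) (hw0 : ∀ x, 0 ≤ w x)
    (hw1 : ∀ x, w x ≤ 1) {δ : ℝ} (hδ : 0 < δ) (hwδ : ∀ x ∈ thickening δ (frontier Ω), w x = 0)
    (η : ContDiffBump (0 : EuclideanSpace ℝ (Fin n))) (hη : η.rOut ≤ δ) :
    Jf n s Ω (η.normed volume ⋆[ContinuousLinearMap.lsmul ℝ ℝ, volume] w) ≤
      Jf n s Ω w + volume Ω * (volume (thickening η.rOut (frontier Ω)) *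
        ENNReal.ofReal (δ ^ (-((n : ℝ) + s)))) := by
  have hΩm := hΩo.measurableSet
  have hkm := ker_meas n (-((n : ℝ) + s))
  set N := thickening η.rOut (frontier Ω) with hN
  have hNm : MeasurableSet N := isOpen_thickening.measurableSet
  set D := ENNReal.ofReal (δ ^ (-((n : ℝ) + s))) with hD
  set e : EuclideanSpace ℝ (Fin n) → ℝ := η.normed volume with he
  have hec : Continuous e := η.continuous_normed
  set o : EuclideanSpace ℝ (Fin n) → ℝ≥0∞ := Ω.indicator 1 with ho
  have hom : Measurable o := measurable_one.indicator hΩm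
  set F : EuclideanSpace ℝ (Fin n) → EuclideanSpace ℝ (Fin n) → ℝ≥0∞ := fun x y =>
    o x * (o y * (ENNReal.ofReal (w x - w y) * ENNReal.ofReal (dist x y ^ (-((n : ℝ) + s))))) with hF
  have hFm : Measurable (fun p : EuclideanSpace ℝ (Fin n) × EuclideanSpace ℝ (Fin n) => F p.1 p.2) := by
    fun_prop
  have hFJ : ∫⁻ x, ∫⁻ y, F x y = Jf n s Ω w := by
    unfold Jf
    rw [← lintegral_indicator hΩm]
    congr 1
    ext x
    by_cases hx : x ∈ Ω
    · simp only [indicator_of_mem hx, hF, ho, Pi.one_apply, one_mul]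
      rw [← lintegral_indicator hΩm]
      congr 1
      ext y
      by_cases hy : y ∈ Ω <;> simp [hy]
    · simp [hx, hF, ho]
  -- pointwise estimate for a translate
  have pt : ∀ z, ‖z‖ < η.rOut → ∀ x ∈ Ω, ∀ y ∈ Ω, ENNReal.ofReal (w (x - z) - w (y - z)) *
      ENNReal.ofReal (dist x y ^ (-((n : ℝ) + s))) ≤ F (x - z) (y - z) + N.indicator (fun _ => D) y := by
    intro z hz x hx y hy
    rcases le_or_gt (w (x - z)) (w (y - z)) with hle | hlt
    · rw [ENNReal.ofReal_of_nonpos (by linarith)]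
      simp
    have hxz : x - z ∉ thickening δ (frontier Ω) := by
      intro hmem
      have := hwδ _ hmem
      linarith [hw0 (y - z)]
    have hxzΩ : x - z ∈ Ω := by
      by_contra hcon
      obtain ⟨p, hp, -, hp2⟩ := seg_frontier hx hcon
      apply hxz
      rw [mem_thickening_iff]
      refine ⟨p, hp, ?_⟩
      have : dist x (x - z) = ‖z‖ := by simp
      linarith
    by_cases hyz : y - z ∈ Ω
    · simp [hF, ho, hxzΩ, hyz]
    · obtain ⟨p, hp, hp1, -⟩ := seg_frontier hxzΩ hyz
      have hd : δ ≤ dist x y := by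
        by_contra hcon
        apply hxz
        rw [mem_thickening_iff]
        refine ⟨p, hp, ?_⟩
        rw [dist_sub_right] at hp1
        linarith
      obtain ⟨q, hq, hq1, -⟩ := seg_frontier hy hyz
      have hyN : y ∈ N := by
        rw [hN, mem_thickening_iff]
        refine ⟨q, hq, ?_⟩
        have : dist y (y - z) = ‖z‖ := by simp
        linarith
      rw [indicator_of_mem hyN]
      refine le_trans ?_ le_add_self
      calc _ ≤ ENNReal.ofReal 1 * D := by
            gcongr
            · linarith [hw1 (x - z), hw0 (y - z)]
            · apply ENNReal.ofReal_le_ofReal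
              apply Real.rpow_le_rpow_of_nonpos hδ hd
              have : (0 : ℝ) ≤ n := Nat.cast_nonneg n
              linarith
        _ = D := by simp
  set T : EuclideanSpace ℝ (Fin n) → ℝ≥0∞ := fun z => ∫⁻ x in Ω, ∫⁻ y in Ω,
    ENNReal.ofReal (w (x - z) - w (y - z)) * ENNReal.ofReal (dist x y ^ (-((n : ℝ) + s))) with hT
  set B := Jf n s Ω w + volume Ω * (volume N * D) with hB
  have hTB : ∀ z, ‖z‖ < η.rOut → T z ≤ B := by
    intro z hz
    have hm1 : Measurable (fun p : EuclideanSpace ℝ (Fin n) × EuclideanSpace ℝ (Fin n) =>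
        F (p.1 - z) (p.2 - z)) :=
      hFm.comp (f := fun p : EuclideanSpace ℝ (Fin n) × EuclideanSpace ℝ (Fin n) =>
        (p.1 - z, p.2 - z)) (by fun_prop)
    calc T z ≤ ∫⁻ x in Ω, ∫⁻ y in Ω, F (x - z) (y - z) + N.indicator (fun _ => D) y := by
          apply setLIntegral_mono' hΩm
          intro x hx
          exact setLIntegral_mono' hΩm (fun y hy => pt z hz x hx y hy)
      _ ≤ ∫⁻ x in Ω, (∫⁻ y, F (x - z) (y - z)) + volume N * D := by
          apply lintegral_mono
          intro x
          refine (setLIntegral_le_lintegral _ _).trans ?_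
          rw [lintegral_add_right _ (measurable_const.indicator hNm),
            lintegral_indicator_const hNm, mul_comm]
      _ = (∫⁻ x in Ω, ∫⁻ y, F (x - z) (y - z)) + volume Ω * (volume N * D) := by
          rw [lintegral_add_right _ measurable_const, setLIntegral_const, mul_comm (volume Ω)]
      _ ≤ (∫⁻ x, ∫⁻ y, F (x - z) (y - z)) + volume Ω * (volume N * D) := by
          gcongr
          exact Measure.restrict_le_self
      _ = B := by
          rw [hB, ← hFJ]
          congr 1
          have : ∀ x, ∫⁻ y, F (x - z) (y - z) = ∫⁻ y, F (x - z) y :=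
            fun x => lintegral_sub_right_eq_self (fun y => F (x - z) y) z
          simp_rw [this]
          exact lintegral_sub_right_eq_self (fun x => ∫⁻ y, F x y) z
  have hint : ∀ x, Integrable (fun z => e z * w (x - z)) := by
    intro x
    refine Integrable.mul_bdd (c := 1) η.integrable_normed
      (by apply Measurable.aestronglyMeasurable; fun_prop) (Eventually.of_forall ?_)
    intro z
    rw [Real.norm_eq_abs, abs_of_nonneg (hw0 _)]
    exact hw1 _
  have jensen : ∀ x y, ENNReal.ofReal ((e ⋆[ContinuousLinearMap.lsmul ℝ ℝ, volume] w) x -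
      (e ⋆[ContinuousLinearMap.lsmul ℝ ℝ, volume] w) y) ≤
      ∫⁻ z, ENNReal.ofReal (e z) * ENNReal.ofReal (w (x - z) - w (y - z)) := by
    intro x y
    simp only [convolution, ContinuousLinearMap.lsmul_apply, smul_eq_mul]
    rw [← integral_sub (hint x) (hint y)]
    have h1 : Integrable (fun z => max (e z * w (x - z) - e z * w (y - z)) 0) :=
      ((hint x).sub (hint y)).pos_part
    calc ENNReal.ofReal (∫ z, (e z * w (x - z) - e z * w (y - z)))
        ≤ ENNReal.ofReal (∫ z, max (e z * w (x - z) - e z * w (y - z)) 0) := by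
          apply ENNReal.ofReal_le_ofReal
          exact integral_mono ((hint x).sub (hint y)) h1 (fun z => le_max_left _ _)
      _ = ∫⁻ z, ENNReal.ofReal (max (e z * w (x - z) - e z * w (y - z)) 0) :=
          ofReal_integral_eq_lintegral_ofReal h1 (Eventually.of_forall fun z => le_max_right _ _)
      _ = _ := by
          congr 1
          ext z
          rw [← ENNReal.ofReal_mul (η.nonneg_normed z), mul_sub]
          simp [he]
  calc Jf n s Ω (e ⋆[ContinuousLinearMap.lsmul ℝ ℝ, volume] w)
      ≤ ∫⁻ x in Ω, ∫⁻ y in Ω, ∫⁻ z, ENNReal.ofReal (e z) * (ENNReal.ofReal (w (x - z) - w (y - z)) *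
          ENNReal.ofReal (dist x y ^ (-((n : ℝ) + s)))) := by
        unfold Jf
        apply lintegral_mono
        intro x
        apply lintegral_mono
        intro y
        simp only
        simp_rw [← mul_assoc]
        rw [lintegral_mul_const _ (by fun_prop)]
        gcongr
        exact jensen x y
    _ = ∫⁻ x in Ω, ∫⁻ z, ∫⁻ y in Ω, ENNReal.ofReal (e z) * (ENNReal.ofReal (w (x - z) - w (y - z)) *
          ENNReal.ofReal (dist x y ^ (-((n : ℝ) + s)))) := by
        congr 1
        ext x
        rw [lintegral_lintegral_swap]
        apply Measurable.aemeasurable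
        fun_prop
    _ = ∫⁻ z, ∫⁻ x in Ω, ∫⁻ y in Ω, ENNReal.ofReal (e z) * (ENNReal.ofReal (w (x - z) - w (y - z)) *
          ENNReal.ofReal (dist x y ^ (-((n : ℝ) + s)))) := by
        rw [lintegral_lintegral_swap]
        apply Measurable.aemeasurable
        apply Measurable.lintegral_prod_right' (f := fun q : (EuclideanSpace ℝ (Fin n) ×
          EuclideanSpace ℝ (Fin n)) × EuclideanSpace ℝ (Fin n) => ENNReal.ofReal (e q.1.2) *
          (ENNReal.ofReal (w (q.1.1 - q.1.2) - w (q.2 - q.1.2)) *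
          ENNReal.ofReal (dist q.1.1 q.2 ^ (-((n : ℝ) + s)))))
        fun_prop
    _ = ∫⁻ z, ENNReal.ofReal (e z) * T z := by
        congr 1
        ext z
        rw [hT]
        simp only
        rw [← lintegral_const_mul]
        · congr 1
          ext x
          rw [lintegral_const_mul _ (by fun_prop)]
        · apply Measurable.lintegral_prod_right' (f := fun q : EuclideanSpace ℝ (Fin n) ×
            EuclideanSpace ℝ (Fin n) =>
            (ENNReal.ofReal (w (q.1 - z) - w (q.2 - z)) *
            ENNReal.ofReal (dist q.1 q.2 ^ (-((n : ℝ) + s)))))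
          fun_prop
    _ ≤ ∫⁻ z, ENNReal.ofReal (e z) * B := by
        apply lintegral_mono
        intro z
        by_cases hz : ‖z‖ < η.rOut
        · exact mul_le_mul_right (hTB z hz) _
        · have : e z = 0 := by
            have : z ∉ Function.support e := by
              rw [he, η.support_normed_eq]
              simpa using hz
            simpa using this
          simp [this]
    _ = B := by
        rw [lintegral_mul_const _ (by fun_prop), ← ofReal_integral_eq_lintegral_ofReal
          η.integrable_normed (Eventually.of_forall η.nonneg_normed), η.integral_normed]
        simp


noncomputable def psi (n : ℕ) (x : EuclideanSpace ℝ (Fin n)) : ℝ := √(1 + ‖x‖ ^ 2)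

lemma psi_pos {n : ℕ} (x : EuclideanSpace ℝ (Fin n)) : 0 < psi n x :=
  Real.sqrt_pos.2 (by positivity)

lemma psi_sq {n : ℕ} (x : EuclideanSpace ℝ (Fin n)) : psi n x ^ 2 = 1 + ‖x‖ ^ 2 :=
  Real.sq_sqrt (by positivity)

lemma one_le_psi {n : ℕ} (x : EuclideanSpace ℝ (Fin n)) : 1 ≤ psi n x :=
  Real.one_le_sqrt.2 (by nlinarith [sq_nonneg ‖x‖])

lemma norm_le_psi {n : ℕ} (x : EuclideanSpace ℝ (Fin n)) : ‖x‖ ≤ psi n x :=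
  Real.le_sqrt_of_sq_le (by linarith)

lemma psi_contDiff {n : ℕ} : ContDiff ℝ (⊤ : ℕ∞) (psi n) := by
  unfold psi
  apply ContDiff.sqrt
  · exact contDiff_const.add (contDiff_norm_sq ℝ)
  · intro x; positivity

lemma psi_lip {n : ℕ} (x y : EuclideanSpace ℝ (Fin n)) : |psi n x - psi n y| ≤ dist x y := by
  have key : ∀ x y : EuclideanSpace ℝ (Fin n), psi n x - psi n y ≤ dist x y := by
    intro x y
    have h1 := psi_sq x
    have h2 := psi_sq y
    have h3 : ‖x‖ - ‖y‖ ≤ dist x y := by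
      rw [dist_eq_norm]; exact norm_sub_norm_le x y
    have h4 := norm_le_psi y
    have h5 : 0 ≤ dist x y := dist_nonneg
    have h6 := psi_pos x
    have h7 := psi_pos y
    have h8 : psi n x ≤ psi n y + dist x y := by
      apply le_of_sq_le_sq _ (by positivity)
      have : ‖x‖ ^ 2 ≤ (‖y‖ + dist x y) ^ 2 := by
        gcongr; linarith
      nlinarith
    linarith
  rw [abs_le]
  constructor
  · have := key y x
    rw [dist_comm] at this
    linarith
  · exact key x y

lemma pert_bound {n : ℕ} (a x : EuclideanSpace ℝ (Fin n)) : |inner ℝ a x / psi n x| ≤ ‖a‖ := by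
  rw [abs_div, abs_of_pos (psi_pos x), div_le_iff₀ (psi_pos x)]
  refine (abs_real_inner_le_norm a x).trans ?_
  gcongr
  exact norm_le_psi x

lemma pert_lip {n : ℕ} (a x y : EuclideanSpace ℝ (Fin n)) :
    inner ℝ a x / psi n x - inner ℝ a y / psi n y ≤ 2 * ‖a‖ * dist x y := by
  have hx := psi_pos x
  have hy := psi_pos y
  have e : inner ℝ a x / psi n x - inner ℝ a y / psi n y =
      inner ℝ a (x - y) / psi n x + (inner ℝ a y / psi n y) * ((psi n y - psi n x) / psi n x) := by
    rw [inner_sub_right]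
    field_simp
    ring
  rw [e]
  have h1 : inner ℝ a (x - y) / psi n x ≤ ‖a‖ * dist x y := by
    rw [div_le_iff₀ hx]
    have := real_inner_le_norm a (x - y)
    rw [← dist_eq_norm] at this
    have h0 : 0 ≤ ‖a‖ * dist x y := by positivity
    nlinarith [one_le_psi x]
  have h2 : (inner ℝ a y / psi n y) * ((psi n y - psi n x) / psi n x) ≤ ‖a‖ * dist x y := by
    refine (le_abs_self _).trans ?_
    rw [abs_mul]
    have h3 : |(psi n y - psi n x) / psi n x| ≤ dist x y := by
      rw [abs_div, abs_of_pos hx, div_le_iff₀ hx]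
      have := psi_lip y x
      rw [dist_comm] at this
      nlinarith [one_le_psi x, dist_nonneg (x := x) (y := y)]
    exact mul_le_mul (pert_bound a y) h3 (abs_nonneg _) (norm_nonneg _)
  linarith

lemma pert_contDiff {n : ℕ} (a : EuclideanSpace ℝ (Fin n)) :
    ContDiff ℝ (⊤ : ℕ∞) (fun x => inner ℝ a x / psi n x) :=
  (contDiff_const.inner ℝ contDiff_id).div psi_contDiff (fun x => (psi_pos x).ne')

theorem generic_level {n : ℕ} (u : EuclideanSpace ℝ (Fin n) → ℝ) (hu : ContDiff ℝ (⊤ : ℕ∞) u)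
    {ρ : ℝ} (hρ : 0 < ρ) : ∃ a : EuclideanSpace ℝ (Fin n), ‖a‖ < ρ ∧
      ∀ᵐ t : ℝ, ∀ x, u x - inner ℝ a x / psi n x = t →
        fderiv ℝ (fun x => u x - inner ℝ a x / psi n x) x ≠ 0 := by
  set g : EuclideanSpace ℝ (Fin n) → ℝ := fun x => psi n x * u x with hg
  have hgc : ContDiff ℝ (⊤ : ℕ∞) g := psi_contDiff.mul hu
  have hg' : ContDiff ℝ 1 (fderiv ℝ g) := by
    apply hgc.fderiv_right
    norm_cast
  set tt : EuclideanSpace ℝ (Fin n) → ℝ := fun x => psi n x * (g x - fderiv ℝ g x x) with htt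
  have hpsi1 : ContDiff ℝ 1 (psi n) := psi_contDiff.of_le (by norm_cast)
  have hgc1 : ContDiff ℝ 1 g := hgc.of_le (by norm_cast)
  have httc : ContDiff ℝ 1 tt := by
    apply hpsi1.mul
    exact hgc1.sub (hg'.clm_apply contDiff_id)
  set H0 : EuclideanSpace ℝ (Fin n) → EuclideanSpace ℝ (Fin n) × ℝ := fun x =>
    (WithLp.toLp 2 (fun i => fderiv ℝ g x (EuclideanSpace.single i 1)) - (tt x / psi n x) • x, tt x)
    with hH0
  have hH0c : ContDiff ℝ 1 H0 := by
    apply ContDiff.prodMk _ httc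
    apply ContDiff.sub
    · rw [contDiff_euclidean]
      intro i
      exact hg'.clm_apply contDiff_const
    · exact (httc.div hpsi1 (fun x => (psi_pos x).ne')).smul contDiff_id
  have hnull : volume (Set.range H0) = 0 := by
    have h1 : volume ((fun p : EuclideanSpace ℝ (Fin n) × ℝ => H0 p.1) '' univ) = 0 := by
      rw [Measure.volume_eq_prod]
      apply addHaar_image_eq_zero_of_det_fderivWithin_eq_zero
        ((volume : Measure (EuclideanSpace ℝ (Fin n))).prod (volume : Measure ℝ))
        (f' := fun p => (fderiv ℝ H0 p.1).comp (ContinuousLinearMap.fst ℝ _ ℝ))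
      · intro p _
        apply HasFDerivAt.hasFDerivWithinAt
        exact ((hH0c.differentiable (by norm_num)) p.1).hasFDerivAt.comp p hasFDerivAt_fst
      · intro p _
        rw [ContinuousLinearMap.det, LinearMap.det_eq_zero_iff_ker_ne_bot]
        intro hbot
        have : ((0 : EuclideanSpace ℝ (Fin n)), (1 : ℝ)) ∈ LinearMap.ker
          (((fderiv ℝ H0 p.1).comp (ContinuousLinearMap.fst ℝ _ ℝ) : _ →L[ℝ] _) :
            EuclideanSpace ℝ (Fin n) × ℝ →ₗ[ℝ] EuclideanSpace ℝ (Fin n) × ℝ) := by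
          simp
        rw [hbot, Submodule.mem_bot] at this
        simpa using this
    refine measure_mono_null ?_ h1
    rintro _ ⟨x, rfl⟩
    exact ⟨(x, 0), mem_univ _, rfl⟩
  have hae : ∀ᵐ q : EuclideanSpace ℝ (Fin n) × ℝ, q ∉ Set.range H0 := by
    exact measure_eq_zero_iff_ae_notMem.1 hnull
  have hae2 := Measure.ae_ae_of_ae_prod (μ := (volume : Measure (EuclideanSpace ℝ (Fin n))))
    (ν := (volume : Measure ℝ)) hae
  obtain ⟨a, ha, haρ⟩ : ∃ a, (∀ᵐ t : ℝ, (a, t) ∉ Set.range H0) ∧ a ∈ ball 0 ρ := by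
    have hd := hae2.frequently
    by_contra hcon
    push Not at hcon
    have h0 : volume (ball (0 : EuclideanSpace ℝ (Fin n)) ρ) = 0 := by
      refine measure_mono_null ?_ hae2
      intro a ha h
      exact hcon a h ha
    exact (measure_ball_pos volume (0 : EuclideanSpace ℝ (Fin n)) hρ).ne' h0
  refine ⟨a, by simpa using haρ, ?_⟩
  filter_upwards [ha] with t ht x hx hd
  apply ht
  set F : EuclideanSpace ℝ (Fin n) → ℝ := fun x => u x - inner ℝ a x / psi n x with hF
  have hFd : HasFDerivAt F (0 : EuclideanSpace ℝ (Fin n) →L[ℝ] ℝ) x := by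
    rw [← hd]
    exact (((hu.sub (pert_contDiff a)).differentiable (by simp)) x).hasFDerivAt
  have hψd : HasFDerivAt (psi n) (fderiv ℝ (psi n) x) x :=
    ((psi_contDiff.differentiable (by simp)) x).hasFDerivAt
  have hψ' : ∀ v, psi n x * fderiv ℝ (psi n) x v = inner ℝ x v := by
    intro v
    have h1 : HasFDerivAt (fun y => psi n y ^ 2) ((2 * psi n x ^ 1) • fderiv ℝ (psi n) x) x := by
      simpa using hψd.pow 2
    have h2 : HasFDerivAt (fun y : EuclideanSpace ℝ (Fin n) => psi n y ^ 2) (2 • (innerSL ℝ x)) x := by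
      have : (fun y : EuclideanSpace ℝ (Fin n) => psi n y ^ 2) = fun y => 1 + ‖y‖ ^ 2 := by
        ext y; exact psi_sq y
      rw [this]
      exact (hasStrictFDerivAt_norm_sq x).hasFDerivAt.const_add 1
    have h3 := congrArg (fun T => T v) (h1.unique h2)
    simp at h3
    linarith
  have hgd : HasFDerivAt g (fderiv ℝ g x) x := ((hgc.differentiable (by simp)) x).hasFDerivAt
  have hG1 : HasFDerivAt (fun y => psi n y * F y) (psi n x • (0 : EuclideanSpace ℝ (Fin n) →L[ℝ] ℝ) + F x • fderiv ℝ (psi n) x) x :=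
    hψd.mul hFd
  have hG2 : HasFDerivAt (fun y => psi n y * F y) (fderiv ℝ g x - innerSL ℝ a) x := by
    have : (fun y => psi n y * F y) = fun y => g y - innerSL ℝ a y := by
      ext y
      have := (psi_pos y).ne'
      simp only [hF, hg, innerSL_apply_apply]
      field_simp
    rw [this]
    exact hgd.sub (innerSL ℝ a).hasFDerivAt
  have hid : ∀ v, t * fderiv ℝ (psi n) x v = fderiv ℝ g x v - inner ℝ a v := by
    intro v
    have h3 := congrArg (fun T => T v) (hG1.unique hG2)
    simp at h3
    rw [← h3, ← hx]
  have hval : g x - inner ℝ a x = t * psi n x := by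
    rw [← hx]
    have := (psi_pos x).ne'
    simp only [hg]
    field_simp
  have hp := psi_pos x
  have htx : tt x = t := by
    have h1 := hid x
    have h2 := hψ' x
    rw [real_inner_self_eq_norm_sq] at h2
    have h3 := psi_sq x
    simp only [htt]
    have h4 : g x - fderiv ℝ g x x = t * (psi n x - fderiv ℝ (psi n) x x) := by linarith
    rw [h4]
    have : psi n x * (psi n x - fderiv ℝ (psi n) x x) = 1 := by nlinarith
    calc _ = t * (psi n x * (psi n x - fderiv ℝ (psi n) x x)) := by ring
      _ = t := by rw [this, mul_one]
  refine ⟨x, ?_⟩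
  simp only [hH0]
  rw [htx]
  refine Prod.ext ?_ rfl
  ext i
  have h1 := hid (EuclideanSpace.single i 1)
  have h2 := hψ' (EuclideanSpace.single i 1)
  simp only [EuclideanSpace.inner_single_right] at h1 h2
  simp at h1 h2 ⊢
  have h5 : fderiv ℝ (psi n) x (EuclideanSpace.single i 1) = x i / psi n x := by
    rw [eq_div_iff hp.ne']; linarith
  rw [h5] at h1
  rw [div_mul_eq_mul_div, mul_div_assoc]
  linarith

lemma cutoff {n : ℕ} (Γ : Set (EuclideanSpace ℝ (Fin n))) {δ : ℝ} (hδ : 0 < δ) :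
    ∃ ζ : EuclideanSpace ℝ (Fin n) → ℝ, Continuous ζ ∧ (∀ x, 0 ≤ ζ x) ∧ (∀ x, ζ x ≤ 1) ∧
      (∀ x ∈ thickening δ Γ, ζ x = 0) ∧ (∀ x, x ∉ thickening (2 * δ) Γ → ζ x = 1) ∧
      ∀ x y, ζ x - ζ y ≤ dist x y / δ := by
  refine ⟨fun x => 1 - (thickenedIndicator hδ (thickening δ Γ) x : ℝ), ?_, ?_, ?_, ?_, ?_, ?_⟩
  · have := (thickenedIndicator hδ (thickening δ Γ)).continuous
    fun_prop
  · intro x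
    have := thickenedIndicator_le_one hδ (thickening δ Γ) x
    have h2 : (thickenedIndicator hδ (thickening δ Γ) x : ℝ) ≤ 1 := by exact_mod_cast this
    simpa using h2
  · intro x
    simp
  · intro x hx
    simp only [thickenedIndicator_one hδ _ hx]
    simp
  · intro x hx
    have : x ∉ thickening δ (thickening δ Γ) := by
      intro h
      apply hx
      rw [two_mul]
      exact thickening_thickening_subset _ _ _ h
    simp only [thickenedIndicator_zero hδ _ this]
    simp
  · intro x y
    have h := (lipschitzWith_thickenedIndicator hδ (thickening δ Γ)).dist_le_mul y x
    rw [NNReal.dist_eq] at h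
    have h2 := le_of_abs_le h
    rw [NNReal.coe_inv, Real.coe_toNNReal _ hδ.le, dist_comm y x] at h2
    have h3 : δ⁻¹ * dist x y = dist x y / δ := by ring
    linarith

lemma Jf_add_le {n : ℕ} {s : ℝ} {Ω : Set (EuclideanSpace ℝ (Fin n))}
    {f g h : EuclideanSpace ℝ (Fin n) → ℝ} (hg : Measurable g)
    (hfgh : ∀ x y, ENNReal.ofReal (f x - f y) ≤
      ENNReal.ofReal (g x - g y) + ENNReal.ofReal (h x - h y)) :
    Jf n s Ω f ≤ Jf n s Ω g + Jf n s Ω h := by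
  have hK := ker_meas n (-((n : ℝ) + s))
  unfold Jf
  have hm : Measurable (fun p : EuclideanSpace ℝ (Fin n) × EuclideanSpace ℝ (Fin n) =>
      ENNReal.ofReal (g p.1 - g p.2) * ENNReal.ofReal (dist p.1 p.2 ^ (-((n : ℝ) + s)))) := by
    fun_prop
  rw [← lintegral_add_left]
  · apply lintegral_mono
    intro x
    dsimp only
    rw [← lintegral_add_left]
    · apply lintegral_mono
      intro y
      dsimp only
      rw [← add_mul]
      gcongr
      exact hfgh x y
    · exact hm.comp measurable_prodMk_left
  · exact hm.lintegral_prod_right'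

lemma Jf_indicator {n : ℕ} {s : ℝ} {Ω E : Set (EuclideanSpace ℝ (Fin n))}
    (hE : MeasurableSet E) :
    Jf n s Ω (E.indicator 1) = Ls n s (E ∩ Ω) (Eᶜ ∩ Ω) := by
  rw [Ls_inter hE hE.compl]
  unfold Jf
  congr 1
  ext x
  congr 1
  ext y
  congr 1
  by_cases hx : x ∈ E <;> by_cases hy : y ∈ E <;> simp [hx, hy]

lemma ofReal_prod_sub {e z e' z' : ℝ} (he : e = 0 ∨ e = 1) (he' : e' = 0 ∨ e' = 1)
    (hz0 : 0 ≤ z) (hz1 : z ≤ 1) (hz0' : 0 ≤ z') :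
    ENNReal.ofReal (e * z - e' * z') ≤ ENNReal.ofReal (e - e') + ENNReal.ofReal (z - z') := by
  rcases he with rfl | rfl <;> rcases he' with rfl | rfl
  · simp
  · simp [ENNReal.ofReal_of_nonpos, hz0']
  · simp only [one_mul, zero_mul, sub_zero]
    exact (ENNReal.ofReal_le_ofReal hz1).trans le_self_add
  · simp

open scoped Convolution in
theorem approx_step {n : ℕ} (hn : 1 ≤ n) {s : ℝ} (hs : s ∈ Set.Ioo (0 : ℝ) 1)
    (Ω : Set (EuclideanSpace ℝ (Fin n))) (hΩo : IsOpen Ω) (hΩb : IsBounded Ω)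
    {C : ℝ} (hC : 0 ≤ C) (hmink : ∀ δ, 0 < δ → δ ≤ 1 →
      volume (thickening δ (frontier Ω)) ≤ ENNReal.ofReal (C * δ))
    {E : Set (EuclideanSpace ℝ (Fin n))} (hE : MeasurableSet E) {τ : ℝ} (hτ : 0 < τ) :
    ∃ (δ : ℝ) (η : ContDiffBump (0 : EuclideanSpace ℝ (Fin n)))
      (w : EuclideanSpace ℝ (Fin n) → ℝ) (a : EuclideanSpace ℝ (Fin n)),
      0 < δ ∧ δ < τ ∧ η.rOut ≤ δ ∧ η.rOut = 2 * η.rIn ∧ ‖a‖ < τ ∧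
      (∀ x, x ∉ thickening (2 * δ) (frontier Ω) → w x = E.indicator 1 x) ∧
      Measurable w ∧
      ContDiff ℝ (⊤ : ℕ∞) (fun x => (η.normed volume ⋆[ContinuousLinearMap.lsmul ℝ ℝ, volume] w) x
        - inner ℝ a x / psi n x) ∧
      (∀ᵐ t : ℝ, ∀ x, (η.normed volume ⋆[ContinuousLinearMap.lsmul ℝ ℝ, volume] w) x
        - inner ℝ a x / psi n x = t →
        fderiv ℝ (fun x => (η.normed volume ⋆[ContinuousLinearMap.lsmul ℝ ℝ, volume] w) x
          - inner ℝ a x / psi n x) x ≠ 0) ∧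
      Jf n s Ω (fun x => (η.normed volume ⋆[ContinuousLinearMap.lsmul ℝ ℝ, volume] w) x
        - inner ℝ a x / psi n x) ≤ Ls n s (E ∩ Ω) (Eᶜ ∩ Ω) + ENNReal.ofReal τ := by
  obtain ⟨hs0, hs1⟩ := hs
  have hn' : (1 : ℝ) ≤ n := by exact_mod_cast hn
  -- bound on the diameter
  obtain ⟨R, hR⟩ : ∃ R : ℝ, ∀ x ∈ Ω, ∀ y ∈ Ω, dist x y < R := by
    obtain ⟨R, hR⟩ := hΩb.subset_ball (0 : EuclideanSpace ℝ (Fin n))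
    refine ⟨R + R, fun x hx y hy => ?_⟩
    have h1 := mem_ball.1 (hR hx)
    have h2 := mem_ball'.1 (hR hy)
    linarith [dist_triangle x 0 y]
  have hvΩ : volume Ω ≠ ⊤ := hΩb.measure_lt_top.ne
  set σ : ℝ := (1 + s) / 2 with hσ
  have hI1 := near_int hn (β := σ - ((n : ℝ) + s)) (by linarith) R
  have hI2 := near_int hn (β := 1 - ((n : ℝ) + s)) (by linarith) R
  set I1 := ∫⁻ h in ball (0 : EuclideanSpace ℝ (Fin n)) R, ENNReal.ofReal (‖h‖ ^ (σ - ((n : ℝ) + s)))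
  set I2 := ∫⁻ h in ball (0 : EuclideanSpace ℝ (Fin n)) R, ENNReal.ofReal (‖h‖ ^ (1 - ((n : ℝ) + s)))
  -- choice of δ
  obtain ⟨δ, hδ, hδτ, hδ1, hδb⟩ : ∃ δ : ℝ, 0 < δ ∧ δ < τ ∧ 2 * δ ≤ 1 ∧
      ENNReal.ofReal (δ ^ (-σ)) * (2 * ENNReal.ofReal (C * (2 * δ)) * I1) ≤
        ENNReal.ofReal (τ / 3) := by
    have hlim : Tendsto (fun δ : ℝ => δ ^ (1 - σ) * (4 * C * I1.toReal)) (𝓝[>] 0)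
        (𝓝 (0 * (4 * C * I1.toReal))) := by
      apply Tendsto.mul_const
      have : Tendsto (fun δ : ℝ => δ ^ (1 - σ)) (𝓝 0) (𝓝 ((0 : ℝ) ^ (1 - σ))) :=
        (Real.continuousAt_rpow_const 0 (1 - σ) (Or.inr (by linarith))).tendsto
      rw [Real.zero_rpow (by linarith)] at this
      exact this.mono_left nhdsWithin_le_nhds
    rw [zero_mul] at hlim
    have e1 : ∀ᶠ δ : ℝ in 𝓝[>] 0, δ ^ (1 - σ) * (4 * C * I1.toReal) < τ / 3 :=
      hlim.eventually_lt_const (by positivity)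
    have e2 : ∀ᶠ δ : ℝ in 𝓝[>] 0, δ < min τ (1 / 2) :=
      nhdsWithin_le_nhds (eventually_lt_nhds (by positivity))
    obtain ⟨δ, h1, h2, h3⟩ := (e1.and (e2.and self_mem_nhdsWithin)).exists
    have h3 : 0 < δ := h3
    refine ⟨δ, h3, h2.trans_le (min_le_left _ _), ?_, ?_⟩
    · have := h2.trans_le (min_le_right _ _)
      linarith
    · rw [← ENNReal.ofReal_toReal hI1.ne, show (2 : ℝ≥0∞) = ENNReal.ofReal 2 by simp,
        ← ENNReal.ofReal_mul (by norm_num), ← ENNReal.ofReal_mul (by positivity),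
        ← ENNReal.ofReal_mul (by positivity)]
      apply ENNReal.ofReal_le_ofReal
      refine le_trans (le_of_eq ?_) h1.le
      have : δ ^ (1 - σ) = δ * δ ^ (-σ) := by
        rw [sub_eq_add_neg, Real.rpow_add h3, Real.rpow_one]
      rw [this]
      ring
  obtain ⟨ζ, hζc, hζ0, hζ1, hζz, hζo, hζl⟩ := cutoff (frontier Ω) hδ
  have hζm := hζc.measurable
  have hind : ∀ x, (E.indicator 1 x : ℝ) = 0 ∨ (E.indicator 1 x : ℝ) = 1 := fun x => by
    by_cases hx : x ∈ E <;> simp [hx]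
  have hJζ : Jf n s Ω ζ ≤ ENNReal.ofReal (τ / 3) := by
    have h := Jf_holder (n := n) (s := s) (σ := σ) Ω hΩo hR (M := δ ^ (-σ)) (by positivity) (f := ζ)
      ?_ (N := thickening (2 * δ) (frontier Ω)) isOpen_thickening.measurableSet ?_
    · refine h.trans (le_trans ?_ hδb)
      gcongr
      exact hmink _ (by positivity) hδ1
    · intro x _ y _
      rw [Real.rpow_neg hδ.le, inv_mul_eq_div, ← Real.div_rpow dist_nonneg hδ.le]
      have h1 : ζ x - ζ y ≤ 1 := by linarith [hζ1 x, hζ0 y]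
      have h0 : 0 ≤ dist x y / δ := by positivity
      rcases le_total (dist x y / δ) 1 with hle | hle
      · refine (hζl x y).trans ?_
        exact Real.self_le_rpow_of_le_one h0 hle (by linarith)
      · exact h1.trans (Real.one_le_rpow hle (by linarith))
    · intro x _ y _ hx hy
      rw [hζo x hx, hζo y hy]
  set w : EuclideanSpace ℝ (Fin n) → ℝ := fun x => E.indicator 1 x * ζ x with hw
  have hwm : Measurable w := (measurable_one.indicator hE).mul hζm
  have hw0 : ∀ x, 0 ≤ w x := fun x => by
    rcases hind x with h | h <;> simp [hw, h, hζ0 x]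
  have hw1 : ∀ x, w x ≤ 1 := fun x => by
    rcases hind x with h | h <;> simp [hw, h, hζ1 x]
  have hJw : Jf n s Ω w ≤ Ls n s (E ∩ Ω) (Eᶜ ∩ Ω) + ENNReal.ofReal (τ / 3) := by
    refine (Jf_add_le (g := E.indicator 1) (h := ζ) (measurable_one.indicator hE) ?_).trans ?_
    · intro x y
      exact ofReal_prod_sub (hind x) (hind y) (hζ0 x) (hζ1 x) (hζ0 y)
    · rw [Jf_indicator hE]
      gcongr
  -- choice of ε
  obtain ⟨ε, hε, hεδ, hεb⟩ : ∃ ε : ℝ, 0 < ε ∧ ε ≤ δ ∧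
      volume Ω * (ENNReal.ofReal (C * ε) * ENNReal.ofReal (δ ^ (-((n : ℝ) + s)))) ≤
        ENNReal.ofReal (τ / 3) / 2 := by
    have hlim : Tendsto (fun ε : ℝ =>
        volume Ω * (ENNReal.ofReal (C * ε) * ENNReal.ofReal (δ ^ (-((n : ℝ) + s))))) (𝓝[>] 0)
        (𝓝 (volume Ω * (ENNReal.ofReal (C * 0) * ENNReal.ofReal (δ ^ (-((n : ℝ) + s)))))) := by
      apply ENNReal.Tendsto.const_mul _ (Or.inr hvΩ)
      apply ENNReal.Tendsto.mul_const _ (Or.inr ENNReal.ofReal_ne_top)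
      apply ENNReal.tendsto_ofReal
      have : Tendsto (fun ε : ℝ => C * ε) (𝓝 0) (𝓝 (C * 0)) :=
        (continuous_const.mul continuous_id).tendsto 0
      exact this.mono_left nhdsWithin_le_nhds
    simp only [mul_zero, ENNReal.ofReal_zero, zero_mul] at hlim
    have e1 := hlim.eventually_lt_const (u := ENNReal.ofReal (τ / 3) / 2)
      (ENNReal.half_pos (by simpa using by positivity))
    have e2 : ∀ᶠ ε : ℝ in 𝓝[>] 0, ε < δ := nhdsWithin_le_nhds (eventually_lt_nhds hδ)
    obtain ⟨ε, h1, h2, h3⟩ := (e1.and (e2.and self_mem_nhdsWithin)).exists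
    exact ⟨ε, h3, h2.le, h1.le⟩
  let η : ContDiffBump (0 : EuclideanSpace ℝ (Fin n)) := ⟨ε / 2, ε, by positivity, by linarith⟩
  have hηo : η.rOut = ε := rfl
  have hwδ : ∀ x ∈ thickening δ (frontier Ω), w x = 0 := fun x hx => by simp [hw, hζz x hx]
  have hmol := Jf_mollify hs0 Ω hΩo hwm hw0 hw1 hδ hwδ η (by rw [hηo]; exact hεδ)
  set u := η.normed volume ⋆[ContinuousLinearMap.lsmul ℝ ℝ, volume] w with hu
  have hwli : LocallyIntegrable w volume := by
    refine (locallyIntegrable_const (1 : ℝ)).mono hwm.aestronglyMeasurable ?_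
    refine Eventually.of_forall fun x => ?_
    rw [Real.norm_of_nonneg (hw0 x)]
    simpa using hw1 x
  have huc : ContDiff ℝ (⊤ : ℕ∞) u := by
    apply HasCompactSupport.contDiff_convolution_left
    · exact η.hasCompactSupport_normed
    · exact η.contDiff_normed
    · exact hwli
  have hJu : Jf n s Ω u ≤ Ls n s (E ∩ Ω) (Eᶜ ∩ Ω) + ENNReal.ofReal (τ / 3) +
      ENNReal.ofReal (τ / 3) := by
    refine hmol.trans (add_le_add hJw ?_)
    refine le_trans ?_ (hεb.trans ENNReal.half_le_self)
    gcongr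
    rw [hηo]
    exact hmink _ hε (by linarith)
  -- choice of ρ
  obtain ⟨ρ, hρ, hρτ, hρb⟩ : ∃ ρ : ℝ, 0 < ρ ∧ ρ < τ ∧
      ENNReal.ofReal (2 * ρ) * (2 * volume Ω * I2) ≤ ENNReal.ofReal (τ / 3) := by
    have hlim : Tendsto (fun ρ : ℝ => ENNReal.ofReal (2 * ρ) * (2 * volume Ω * I2)) (𝓝[>] 0)
        (𝓝 (ENNReal.ofReal (2 * 0) * (2 * volume Ω * I2))) := by
      apply ENNReal.Tendsto.mul_const _
        (Or.inr (ENNReal.mul_ne_top (ENNReal.mul_ne_top (by simp) hvΩ) hI2.ne))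
      apply ENNReal.tendsto_ofReal
      have : Tendsto (fun ε : ℝ => 2 * ε) (𝓝 0) (𝓝 (2 * 0)) :=
        (continuous_const.mul continuous_id).tendsto 0
      exact this.mono_left nhdsWithin_le_nhds
    simp only [mul_zero, ENNReal.ofReal_zero, zero_mul] at hlim
    have e1 := hlim.eventually_lt_const (u := ENNReal.ofReal (τ / 3)) (by simpa using by positivity)
    have e2 : ∀ᶠ ρ : ℝ in 𝓝[>] 0, ρ < τ := nhdsWithin_le_nhds (eventually_lt_nhds hτ)
    obtain ⟨ρ, h1, h2, h3⟩ := (e1.and (e2.and self_mem_nhdsWithin)).exists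
    exact ⟨ρ, h3, h2, h1.le⟩
  obtain ⟨a, ha, hreg⟩ := generic_level u huc hρ
  refine ⟨δ, η, w, a, hδ, hδτ, hεδ, by change ε = 2 * (ε / 2); ring, ha.trans hρτ, ?_, hwm,
    huc.sub (pert_contDiff a), hreg, ?_⟩
  · intro x hx
    simp [hw, hζo x hx]
  · have h3 : ENNReal.ofReal τ =
        ENNReal.ofReal (τ / 3) + ENNReal.ofReal (τ / 3) + ENNReal.ofReal (τ / 3) := by
      rw [← ENNReal.ofReal_add (by positivity) (by positivity),
        ← ENNReal.ofReal_add (by positivity) (by positivity)]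
      congr 1; ring
    rw [h3, ← add_assoc, ← add_assoc]
    refine (Jf_add_le (g := u) (h := fun x => - (inner ℝ a x / psi n x))
      huc.continuous.measurable ?_).trans (add_le_add hJu ?_)
    · intro x y
      refine le_trans (le_of_eq ?_) ENNReal.ofReal_add_le
      congr 1
      ring
    · refine (Jf_holder (n := n) (s := s) (σ := 1) Ω hΩo hR (M := 2 * ‖a‖) (by positivity)
        ?_ (N := Ω) hΩo.measurableSet ?_).trans ?_
      · intro x _ y _
        rw [Real.rpow_one]
        have := pert_lip a y x
        rw [dist_comm y x] at this
        linarith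
      · intro x hx y _ hx'
        exact absurd hx hx'
      · refine le_trans ?_ hρb
        gcongr

lemma ae_prod_conv {n : ℕ} {s : ℝ} {A B : ℕ → Set (EuclideanSpace ℝ (Fin n))}
    {A' B' : Set (EuclideanSpace ℝ (Fin n))}
    (hA : ∀ᵐ x, ∀ᶠ j in atTop, (x ∈ A j ↔ x ∈ A')) (hB : ∀ᵐ x, ∀ᶠ j in atTop, (x ∈ B j ↔ x ∈ B')) :
    ∀ᵐ p : EuclideanSpace ℝ (Fin n) × EuclideanSpace ℝ (Fin n), Tendsto (fun j =>
      (A j ×ˢ B j).indicator (fun p => ENNReal.ofReal (dist p.1 p.2 ^ (-((n : ℝ) + s)))) p) atTop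
      (𝓝 ((A' ×ˢ B').indicator (fun p => ENNReal.ofReal (dist p.1 p.2 ^ (-((n : ℝ) + s)))) p)) := by
  have h1 := (Measure.quasiMeasurePreserving_fst (μ := (volume : Measure (EuclideanSpace ℝ (Fin n))))
    (ν := (volume : Measure (EuclideanSpace ℝ (Fin n))))).ae hA
  have h2 := (Measure.quasiMeasurePreserving_snd (μ := (volume : Measure (EuclideanSpace ℝ (Fin n))))
    (ν := (volume : Measure (EuclideanSpace ℝ (Fin n))))).ae hB
  rw [Measure.volume_eq_prod]
  filter_upwards [h1, h2] with p hp1 hp2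
  apply tendsto_const_nhds.congr'
  filter_upwards [hp1, hp2] with j hj1 hj2
  have : p ∈ A j ×ˢ B j ↔ p ∈ A' ×ˢ B' := by simp only [mem_prod, hj1, hj2]
  by_cases h : p ∈ A' ×ˢ B'
  · rw [indicator_of_mem h, indicator_of_mem (this.2 h)]
  · rw [indicator_of_notMem h, indicator_of_notMem (fun h' => h (this.1 h'))]

lemma ker_prod_meas (n : ℕ) (s : ℝ) : Measurable (fun p : EuclideanSpace ℝ (Fin n) ×
    EuclideanSpace ℝ (Fin n) => ENNReal.ofReal (dist p.1 p.2 ^ (-((n : ℝ) + s)))) := by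
  fun_prop

lemma Ls_fatou {n : ℕ} {s : ℝ} {A B : ℕ → Set (EuclideanSpace ℝ (Fin n))}
    {A' B' : Set (EuclideanSpace ℝ (Fin n))}
    (hAm : ∀ j, MeasurableSet (A j)) (hBm : ∀ j, MeasurableSet (B j))
    (hAm' : MeasurableSet A') (hBm' : MeasurableSet B')
    (hA : ∀ᵐ x, ∀ᶠ j in atTop, (x ∈ A j ↔ x ∈ A')) (hB : ∀ᵐ x, ∀ᶠ j in atTop, (x ∈ B j ↔ x ∈ B')) :
    Ls n s A' B' ≤ liminf (fun j => Ls n s (A j) (B j)) atTop := by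
  rw [Ls_prod hAm' hBm']
  simp_rw [fun j => Ls_prod (s := s) (hAm j) (hBm j)]
  refine le_trans (lintegral_mono_ae ?_) (lintegral_liminf_le fun j =>
    (ker_prod_meas n s).indicator ((hAm j).prod (hBm j)))
  filter_upwards [ae_prod_conv (s := s) hA hB] with p hp
  exact hp.liminf_eq.ge

lemma Ls_dct {n : ℕ} {s : ℝ} {A B : ℕ → Set (EuclideanSpace ℝ (Fin n))}
    {A' B' X Y : Set (EuclideanSpace ℝ (Fin n))}
    (hAm : ∀ j, MeasurableSet (A j)) (hBm : ∀ j, MeasurableSet (B j))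
    (hAm' : MeasurableSet A') (hBm' : MeasurableSet B')
    (hX : MeasurableSet X) (hY : MeasurableSet Y)
    (hAX : ∀ j, A j ⊆ X) (hBY : ∀ j, B j ⊆ Y) (hXY : Ls n s X Y < ⊤)
    (hA : ∀ᵐ x, ∀ᶠ j in atTop, (x ∈ A j ↔ x ∈ A')) (hB : ∀ᵐ x, ∀ᶠ j in atTop, (x ∈ B j ↔ x ∈ B')) :
    Tendsto (fun j => Ls n s (A j) (B j)) atTop (𝓝 (Ls n s A' B')) := by
  rw [Ls_prod hAm' hBm']
  simp_rw [fun j => Ls_prod (s := s) (hAm j) (hBm j)]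
  rw [Ls_prod hX hY] at hXY
  refine tendsto_lintegral_of_dominated_convergence _ (fun j =>
    (ker_prod_meas n s).indicator ((hAm j).prod (hBm j))) (fun j => ?_) hXY.ne
    (ae_prod_conv hA hB)
  refine Eventually.of_forall fun p => ?_
  exact indicator_le_indicator_of_subset (prod_mono (hAX j) (hBY j)) (fun _ => zero_le) p

lemma Ls_mono {n : ℕ} {s : ℝ} {A B X Y : Set (EuclideanSpace ℝ (Fin n))}
    (hAX : A ⊆ X) (hBY : B ⊆ Y) : Ls n s A B ≤ Ls n s X Y := by
  unfold Ls
  refine (lintegral_mono_set hAX).trans (lintegral_mono fun x => ?_)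
  exact lintegral_mono_set hBY

lemma Ls_symm {n : ℕ} {s : ℝ} (A B : Set (EuclideanSpace ℝ (Fin n))) :
    Ls n s A B = Ls n s B A := by
  unfold Ls
  rw [lintegral_lintegral_swap (ker_prod_meas n s).aemeasurable]
  simp_rw [dist_comm]

lemma locConv_of_ae {n : ℕ} {F : ℕ → Set (EuclideanSpace ℝ (Fin n))}
    {E : Set (EuclideanSpace ℝ (Fin n))} (hF : ∀ j, MeasurableSet (F j)) (hE : MeasurableSet E)
    (hc : ∀ᵐ x, ∀ᶠ j in atTop, (x ∈ F j ↔ x ∈ E)) : LocConv n F E := by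
  intro K hK
  obtain ⟨R, hR⟩ := hK.subset_ball (0 : EuclideanSpace ℝ (Fin n))
  have hmeas : ∀ j, MeasurableSet ((F j ∆ E) ∩ ball 0 R) := fun j =>
    ((hF j).symmDiff hE).inter measurableSet_ball
  have key : Tendsto (fun j => volume ((F j ∆ E) ∩ ball 0 R)) atTop (𝓝 0) := by
    have h0 : (∫⁻ _ : EuclideanSpace ℝ (Fin n), (0 : ℝ≥0∞)) = 0 := by simp
    rw [← h0]
    simp_rw [fun j => (lintegral_indicator_one (μ := volume) (hmeas j)).symm]
    refine tendsto_lintegral_of_dominated_convergence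
      ((ball (0 : EuclideanSpace ℝ (Fin n)) R).indicator 1) (fun j =>
      measurable_one.indicator (hmeas j)) (fun j => ?_) ?_ ?_
    · refine Eventually.of_forall fun p => ?_
      exact indicator_le_indicator_of_subset inter_subset_right (fun _ => zero_le) p
    · rw [lintegral_indicator_one measurableSet_ball]
      exact measure_ball_lt_top.ne
    · filter_upwards [hc] with x hx
      apply tendsto_const_nhds.congr'
      filter_upwards [hx] with j hj
      rw [indicator_of_notMem]
      rintro ⟨h, -⟩
      rw [mem_symmDiff] at h
      tauto
  refine tendsto_of_tendsto_of_tendsto_of_le_of_le tendsto_const_nhds key (fun _ => zero_le) ?_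
  intro j
  exact measure_mono (inter_subset_inter_right _ hR)

lemma level_conv {n : ℕ} {v : ℕ → EuclideanSpace ℝ (Fin n) → ℝ} {E : Set (EuclideanSpace ℝ (Fin n))}
    (hvc : ∀ᵐ x, Tendsto (fun k => v k x) atTop (𝓝 (E.indicator 1 x))) {t : ℝ} (ht : t ∈ Ioo (0 : ℝ) 1) :
    ∀ᵐ x, ∀ᶠ k in atTop, (x ∈ {x | t < v k x} ↔ x ∈ E) := by
  filter_upwards [hvc] with x hx
  by_cases h : x ∈ E
  · rw [indicator_of_mem h] at hx
    filter_upwards [hx.eventually_const_lt (show t < 1 from ht.2)] with k hk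
    simp [h, hk]
  · rw [indicator_of_notMem h] at hx
    filter_upwards [hx.eventually_lt_const ht.1] with k hk
    simp [h, hk.le]

lemma ae_inter {n : ℕ} {F : ℕ → Set (EuclideanSpace ℝ (Fin n))}
    {E : Set (EuclideanSpace ℝ (Fin n))} (X : Set (EuclideanSpace ℝ (Fin n)))
    (hc : ∀ᵐ x, ∀ᶠ j in atTop, (x ∈ F j ↔ x ∈ E)) :
    (∀ᵐ x, ∀ᶠ j in atTop, (x ∈ F j ∩ X ↔ x ∈ E ∩ X)) ∧
    (∀ᵐ x, ∀ᶠ j in atTop, (x ∈ (F j)ᶜ ∩ X ↔ x ∈ Eᶜ ∩ X)) := by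
  constructor
  · filter_upwards [hc] with x hx
    filter_upwards [hx] with j hj
    simp [hj]
  · filter_upwards [hc] with x hx
    filter_upwards [hx] with j hj
    simp [hj]

theorem select_level {n : ℕ} {s : ℝ} {Ω E : Set (EuclideanSpace ℝ (Fin n))} (hΩ : MeasurableSet Ω)
    (hE : MeasurableSet E) {v : ℕ → EuclideanSpace ℝ (Fin n) → ℝ} (hv : ∀ k, Measurable (v k))
    (hvc : ∀ᵐ x, Tendsto (fun k => v k x) atTop (𝓝 (E.indicator 1 x)))
    (hP : Ls n s (E ∩ Ω) (Eᶜ ∩ Ω) < ⊤)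
    (hJ : ∀ k : ℕ, Jf n s Ω (v k) ≤ Ls n s (E ∩ Ω) (Eᶜ ∩ Ω) + ENNReal.ofReal (1 / ((k : ℝ) + 1)))
    {Q : ℝ → Prop} (hQ : ∀ᵐ t, Q t) :
    ∃ t ∈ Ioo (0 : ℝ) 1, Q t ∧ ∃ φ : ℕ → ℕ, StrictMono φ ∧
      (∀ j, Ls n s ({x | t < v (φ j) x} ∩ Ω) ({x | t < v (φ j) x}ᶜ ∩ Ω) ≤
        Ls n s (E ∩ Ω) (Eᶜ ∩ Ω) + 1) ∧
      Tendsto (fun j => Ls n s ({x | t < v (φ j) x} ∩ Ω) ({x | t < v (φ j) x}ᶜ ∩ Ω)) atTop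
        (𝓝 (Ls n s (E ∩ Ω) (Eᶜ ∩ Ω))) := by
  set P := Ls n s (E ∩ Ω) (Eᶜ ∩ Ω) with hPdef
  set g : ℕ → ℝ → ℝ≥0∞ := fun k t => Ls n s ({x | t < v k x} ∩ Ω) ({x | t < v k x}ᶜ ∩ Ω) with hg
  have hset : ∀ k t, MeasurableSet {x | t < v k x} := fun k t => measurableSet_lt measurable_const (hv k)
  have hlim1 : Tendsto (fun k : ℕ => P + ENNReal.ofReal (1 / ((k : ℝ) + 1))) atTop (𝓝 P) := by
    have h1 : Tendsto (fun k : ℕ => ENNReal.ofReal (1 / ((k : ℝ) + 1))) atTop (𝓝 (ENNReal.ofReal 0)) :=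
      ENNReal.tendsto_ofReal tendsto_one_div_add_atTop_nhds_zero_nat
    simpa using (tendsto_const_nhds (x := P)).add h1
  have hfat : ∀ t ∈ Ioo (0 : ℝ) 1, ∀ φ : ℕ → ℕ, StrictMono φ →
      P ≤ liminf (fun j => g (φ j) t) atTop := by
    intro t ht φ hφ
    have h := level_conv (v := fun j => v (φ j)) (E := E) (by
      filter_upwards [hvc] with x hx
      exact hx.comp hφ.tendsto_atTop) ht
    obtain ⟨h1, h2⟩ := ae_inter Ω h
    exact Ls_fatou (fun j => (hset _ t).inter hΩ) (fun j => (hset _ t).compl.inter hΩ)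
      (hE.inter hΩ) (hE.compl.inter hΩ) h1 h2
  have hgm : ∀ k, Measurable (g k) := by
    intro k
    have hS : MeasurableSet {p : EuclideanSpace ℝ (Fin n) × ℝ | p.2 < v k p.1} :=
      measurableSet_lt (by fun_prop) ((hv k).comp measurable_fst)
    have ham : Measurable (fun p : EuclideanSpace ℝ (Fin n) × ℝ =>
        ({x | p.2 < v k x}.indicator 1 p.1 : ℝ≥0∞)) :=
      (measurable_one.indicator hS : Measurable
        ({p : EuclideanSpace ℝ (Fin n) × ℝ | p.2 < v k p.1}.indicator (1 : EuclideanSpace ℝ (Fin n) × ℝ → ℝ≥0∞)))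
    have hbm : Measurable (fun p : EuclideanSpace ℝ (Fin n) × ℝ =>
        ({x | p.2 < v k x}ᶜ.indicator 1 p.1 : ℝ≥0∞)) :=
      (measurable_one.indicator hS.compl : Measurable
        ({p : EuclideanSpace ℝ (Fin n) × ℝ | p.2 < v k p.1}ᶜ.indicator (1 : EuclideanSpace ℝ (Fin n) × ℝ → ℝ≥0∞)))
    have heq : g k = fun t => ∫⁻ x in Ω, ∫⁻ y in Ω, {x | t < v k x}.indicator 1 x *
        {x | t < v k x}ᶜ.indicator 1 y * ENNReal.ofReal (dist x y ^ (-((n : ℝ) + s))) := by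
      ext t
      exact Ls_inter (hset k t) (hset k t).compl
    rw [heq]
    apply Measurable.lintegral_prod_right' (f := fun q : ℝ × EuclideanSpace ℝ (Fin n) =>
      ∫⁻ y in Ω, {x | q.1 < v k x}.indicator 1 q.2 *
        {x | q.1 < v k x}ᶜ.indicator 1 y * ENNReal.ofReal (dist q.2 y ^ (-((n : ℝ) + s))))
    apply Measurable.lintegral_prod_right' (f := fun q : (ℝ × EuclideanSpace ℝ (Fin n)) ×
      EuclideanSpace ℝ (Fin n) => {x | q.1.1 < v k x}.indicator 1 q.1.2 *
        {x | q.1.1 < v k x}ᶜ.indicator 1 q.2 * ENNReal.ofReal (dist q.1.2 q.2 ^ (-((n : ℝ) + s))))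
    refine Measurable.mul (Measurable.mul ?_ ?_) ?_
    · exact ham.comp (f := fun q : (ℝ × EuclideanSpace ℝ (Fin n)) ×
        EuclideanSpace ℝ (Fin n) => (q.1.2, q.1.1)) (by fun_prop)
    · exact hbm.comp (f := fun q : (ℝ × EuclideanSpace ℝ (Fin n)) ×
        EuclideanSpace ℝ (Fin n) => (q.2, q.1.1)) (by fun_prop)
    · fun_prop
  set G : ℝ → ℝ≥0∞ := fun t => liminf (fun k => g k t) atTop with hG
  have hGm : Measurable G := Measurable.liminf hgm
  have hint : ∫⁻ t in Ioo (0 : ℝ) 1, G t ≤ ∫⁻ _ in Ioo (0 : ℝ) 1, P := by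
    calc _ ≤ liminf (fun k => ∫⁻ t in Ioo (0 : ℝ) 1, g k t) atTop := lintegral_liminf_le hgm
      _ ≤ liminf (fun k : ℕ => P + ENNReal.ofReal (1 / ((k : ℝ) + 1))) atTop :=
        liminf_le_liminf (Eventually.of_forall fun k => (coarea_le (hv k)).trans (hJ k))
      _ = P := hlim1.liminf_eq
      _ = _ := by simp
  have hae : (fun _ => P) =ᵐ[volume.restrict (Ioo (0 : ℝ) 1)] G := by
    refine ae_eq_of_ae_le_of_lintegral_le ?_ ?_ hGm.aemeasurable hint
    · rw [EventuallyLE, ae_restrict_iff' measurableSet_Ioo]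
      exact Eventually.of_forall fun t ht => hfat t ht id strictMono_id
    · simpa using hP.ne
  obtain ⟨t, ht, hPG, hQt⟩ : ∃ t ∈ Ioo (0 : ℝ) 1, P = G t ∧ Q t := by
    have h1 : ∀ᵐ t ∂(volume.restrict (Ioo (0 : ℝ) 1)), t ∈ Ioo (0 : ℝ) 1 ∧ P = G t ∧ Q t := by
      filter_upwards [hae, ae_restrict_of_ae hQ, ae_restrict_mem measurableSet_Ioo] with t h1 h2 h3
      exact ⟨h3, h1, h2⟩
    have : NeBot (ae (volume.restrict (Ioo (0 : ℝ) 1))) := by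
      rw [ae_neBot]
      intro h
      rw [Measure.restrict_eq_zero] at h
      simp at h
    obtain ⟨t, h⟩ := h1.exists
    exact ⟨t, h.1, h.2⟩
  refine ⟨t, ht, hQt, ?_⟩
  obtain ⟨φ, hφ, hφb⟩ := extraction_forall_of_frequently
    (P := fun j k => g k t < P + ENNReal.ofReal (1 / ((j : ℝ) + 1))) (by
      intro j
      apply frequently_lt_of_liminf_lt
      · isBoundedDefault
      · change G t < _
        rw [← hPG]
        apply ENNReal.lt_add_right hP.ne
        simp
        positivity)
  refine ⟨φ, hφ, ?_, ?_⟩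
  · intro j
    refine (hφb j).le.trans ?_
    gcongr
    rw [ENNReal.ofReal_le_one, div_le_one (by positivity)]
    linarith [(Nat.cast_nonneg j : (0 : ℝ) ≤ j)]
  · refine tendsto_of_le_liminf_of_limsup_le (hfat t ht φ hφ) ?_
    refine le_trans (limsup_le_limsup (Eventually.of_forall fun j => (hφb j).le)) ?_
    exact hlim1.limsup_eq.le

open scoped Convolution in
lemma conv_congr_ball {n : ℕ} (η : ContDiffBump (0 : EuclideanSpace ℝ (Fin n)))
    {w w' : EuclideanSpace ℝ (Fin n) → ℝ} {x : EuclideanSpace ℝ (Fin n)}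
    (h : ∀ y ∈ ball x η.rOut, w y = w' y) :
    (η.normed volume ⋆[ContinuousLinearMap.lsmul ℝ ℝ, volume] w) x =
      (η.normed volume ⋆[ContinuousLinearMap.lsmul ℝ ℝ, volume] w') x := by
  rw [convolution_def, convolution_def]
  congr 1
  ext t
  by_cases ht : t ∈ ball (0 : EuclideanSpace ℝ (Fin n)) η.rOut
  · rw [h]
    simpa [mem_ball, dist_eq_norm] using ht
  · rw [← η.support_normed_eq (μ := volume), Function.notMem_support] at ht
    simp [ht]

open scoped Convolution in
/-- Theorem 1.3: in a bounded open set `Ω` with Lipschitz boundary, a set `E`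
has finite `s`-perimeter in `Ω` iff it can be approximated by smooth open sets with convergence
of the `s`-perimeters in `Ω` and uniform convergence of the boundaries away from `∂Ω`. -/
theorem approximation_in_bounded_lipschitz_open_set
    (n : ℕ) (hn : 1 ≤ n) (s : ℝ) (hs : s ∈ Set.Ioo (0 : ℝ) 1)
    (Ω : Set (EuclideanSpace ℝ (Fin n))) (hΩo : IsOpen Ω) (hΩb : IsBounded Ω)
    (hΩlip : HasLipschitzBoundary Ω)
    (E : Set (EuclideanSpace ℝ (Fin n))) (hE : MeasurableSet E)
    (hEnorm : frontier E = mtBoundary E) :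
    Ps n s E Ω < ⊤
      ↔ ∃ (Eh : ℕ → Set (EuclideanSpace ℝ (Fin n))) (ε : ℕ → ℝ),
          (∀ h, HasSmoothBoundary (Eh h)) ∧
          (∀ h, 0 < ε h) ∧ Tendsto ε atTop (𝓝 0) ∧
          -- (i)
          LocConv n Eh E ∧ (⨆ h, Ps n s (Eh h) Ω) < ⊤ ∧
          -- (ii)
          Tendsto (fun h => Ps n s (Eh h) Ω) atTop (𝓝 (Ps n s E Ω)) ∧
          -- (iii)
          (∀ h, frontier (Eh h) \ Metric.thickening (ε h) (frontier Ω)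
            ⊆ Metric.thickening (ε h) (frontier E)) := by
  constructor
  · intro hfin
    have hΩm := hΩo.measurableSet
    obtain ⟨C, hC, hmink⟩ := mink Ω hΩb hΩlip
    have hnull : volume (frontier Ω) = 0 := frontier_null Ω hmink
    have hP : Ls n s (E ∩ Ω) (Eᶜ ∩ Ω) < ⊤ :=
      lt_of_le_of_lt (le_self_add.trans le_self_add) hfin
    have hLs : Ls n s Ω Ωᶜ < ⊤ := Ls_compl_lt_top hn hs Ω hΩo hΩb hC hmink
    have hLs' : Ls n s Ωᶜ Ω < ⊤ := by rw [Ls_symm]; exact hLs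
    have hstep := fun k : ℕ => approx_step hn hs Ω hΩo hΩb hC hmink hE
      (τ := 1 / ((k : ℝ) + 1)) (by positivity)
    choose δ η w a hδ hδτ hηδ hη2 haτ hwE hwm hvC hreg hJ using hstep
    have hτ0 : Tendsto (fun k : ℕ => 1 / ((k : ℝ) + 1)) atTop (𝓝 0) :=
      tendsto_one_div_add_atTop_nhds_zero_nat
    have hδ0 : Tendsto δ atTop (𝓝 0) :=
      squeeze_zero (fun k => (hδ k).le) (fun k => (hδτ k).le) hτ0
    have hη0 : Tendsto (fun k => (η k).rOut) atTop (𝓝 0) :=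
      squeeze_zero (fun k => (η k).rOut_pos.le) hηδ hδ0
    set u : ℕ → EuclideanSpace ℝ (Fin n) → ℝ := fun k =>
      (η k).normed volume ⋆[ContinuousLinearMap.lsmul ℝ ℝ, volume] w k with hu
    set v : ℕ → EuclideanSpace ℝ (Fin n) → ℝ := fun k x =>
      u k x - inner ℝ (a k) x / psi n x with hv
    have hvC' : ∀ k, ContDiff ℝ (⊤ : ℕ∞) (v k) := hvC
    have hvm : ∀ k, Measurable (v k) := fun k => (hvC' k).continuous.measurable
    -- points far from the boundary see the indicator of E
    have hfar : ∀ k x, x ∉ thickening (3 * δ k) (frontier Ω) → ∀ y ∈ ball x (η k).rOut,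
        w k y = E.indicator 1 y := by
      intro k x hx y hy
      apply hwE
      intro hy'
      apply hx
      rw [mem_thickening_iff] at hy' ⊢
      obtain ⟨z, hz, hyz⟩ := hy'
      refine ⟨z, hz, ?_⟩
      have h1 := mem_ball'.1 hy
      have h2 := hηδ k
      linarith [dist_triangle x y z]
    have hvc : ∀ᵐ x, Tendsto (fun k => v k x) atTop (𝓝 (E.indicator 1 x)) := by
      have hli : LocallyIntegrable (E.indicator 1 : EuclideanSpace ℝ (Fin n) → ℝ) volume := by
        refine (locallyIntegrable_const (1 : ℝ)).mono
          (measurable_one.indicator hE).aestronglyMeasurable ?_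
        refine Eventually.of_forall fun x => ?_
        by_cases hx : x ∈ E <;> simp [hx]
      have h1 := ContDiffBump.ae_convolution_tendsto_right_of_locallyIntegrable (μ := volume)
        (K := 2) hη0 (Eventually.of_forall fun k => (hη2 k).le) hli
      filter_upwards [h1, measure_eq_zero_iff_ae_notMem.1 hnull] with x hx hxΩ
      have hpert : Tendsto (fun k => inner ℝ (a k) x / psi n x) atTop (𝓝 0) :=
        squeeze_zero_norm (fun k => (pert_bound (a k) x).trans (haτ k).le) hτ0
      have hux : Tendsto (fun k => u k x) atTop (𝓝 (E.indicator 1 x)) := by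
        refine hx.congr' ?_
        obtain ⟨r, hr, hrb⟩ := Metric.isOpen_iff.1 isClosed_frontier.isOpen_compl x hxΩ
        have e1 : ∀ᶠ k in atTop, δ k < r / 3 := hδ0.eventually_lt_const (by positivity)
        filter_upwards [e1] with k hk
        symm
        apply conv_congr_ball
        apply hfar
        intro hmem
        rw [mem_thickening_iff] at hmem
        obtain ⟨z, hz, hxz⟩ := hmem
        exact hrb (mem_ball'.2 (by linarith : dist x z < r)) hz
      simpa using hux.sub hpert
    obtain ⟨t, ht, hQ, φ, hφ, hφb, hφt⟩ := select_level hΩm hE hvm hvc hP hJ (ae_all_iff.2 hreg)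
    obtain ⟨N, hN⟩ := ((hτ0.eventually_lt_const (u := min t (1 - t))
      (lt_min ht.1 (by linarith [ht.2]))).exists_forall_of_atTop)
    set ψ : ℕ → ℕ := fun j => φ (j + N) with hψ
    have hψm : StrictMono ψ := hφ.comp (strictMono_id.add_const N)
    have hψN : ∀ j, N ≤ ψ j := fun j => (Nat.le_add_left N j).trans (hφ.id_le _)
    set F : ℕ → Set (EuclideanSpace ℝ (Fin n)) := fun j => {x | t < v (ψ j) x} with hF
    have hFm : ∀ j, MeasurableSet (F j) := fun j => measurableSet_lt measurable_const (hvm _)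
    have hc : ∀ᵐ x, ∀ᶠ j in atTop, (x ∈ F j ↔ x ∈ E) := by
      refine level_conv (v := fun j => v (ψ j)) ?_ ht
      filter_upwards [hvc] with x hx
      exact hx.comp hψm.tendsto_atTop
    obtain ⟨hc1, hc2⟩ := ae_inter Ω hc
    obtain ⟨hc3, hc4⟩ := ae_inter Ωᶜ hc
    refine ⟨F, fun j => 3 * δ (ψ j), ?_, ?_, ?_, ?_, ?_, ?_, ?_⟩
    · intro j
      exact ⟨v (ψ j), t, hvC' _, hQ _, rfl⟩
    · intro j
      have := hδ (ψ j)
      positivity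
    · have := (hδ0.comp hψm.tendsto_atTop).const_mul 3
      simpa using this
    · exact locConv_of_ae hFm hE hc
    · have hb : ∀ j, Ps n s (F j) Ω ≤ Ls n s (E ∩ Ω) (Eᶜ ∩ Ω) + 1 + Ls n s Ω Ωᶜ + Ls n s Ωᶜ Ω := by
        intro j
        unfold Ps
        refine add_le_add (add_le_add (hφb (j + N)) ?_) ?_
        · exact Ls_mono inter_subset_right (fun x hx => hx.2)
        · exact Ls_mono (fun x hx => hx.2) inter_subset_right
      refine lt_of_le_of_lt (iSup_le hb) ?_
      exact ENNReal.add_lt_top.2 ⟨ENNReal.add_lt_top.2 ⟨ENNReal.add_lt_top.2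
        ⟨hP, ENNReal.one_lt_top⟩, hLs⟩, hLs'⟩
    · unfold Ps
      refine Tendsto.add (Tendsto.add ?_ ?_) ?_
      · exact hφt.comp (tendsto_add_atTop_nat N)
      · exact Ls_dct (fun j => (hFm j).inter hΩm) (fun j => (hFm j).compl.diff hΩm)
          (hE.inter hΩm) (hE.compl.diff hΩm) hΩm hΩm.compl (fun j => inter_subset_right)
          (fun j x hx => hx.2) hLs hc1 hc4
      · exact Ls_dct (fun j => (hFm j).diff hΩm) (fun j => (hFm j).compl.inter hΩm)
          (hE.diff hΩm) (hE.compl.inter hΩm) hΩm.compl hΩm (fun j x hx => hx.2)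
          (fun j => inter_subset_right) hLs' hc3 hc2
    · rintro j x ⟨hxF, hxΩ⟩
      by_contra hxE
      have hvt : t = v (ψ j) x :=
        frontier_lt_subset_eq continuous_const (hvC' (ψ j)).continuous hxF
      have hw := hfar (ψ j) x hxΩ
      have hrpos := (η (ψ j)).rOut_pos
      have hconst : ∀ y ∈ ball x (η (ψ j)).rOut, (y ∈ E ↔ x ∈ E) := by
        intro y hy
        by_contra hne
        have hnone : ¬ (ball x (η (ψ j)).rOut ∩ frontier E).Nonempty := by
          rintro ⟨z, hz, hzE⟩
          apply hxE
          rw [mem_thickening_iff]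
          refine ⟨z, hzE, ?_⟩
          have h1 := mem_ball'.1 hz
          have h2 := hηδ (ψ j)
          have h3 := hδ (ψ j)
          linarith
        have hpre : IsPreconnected (ball x (η (ψ j)).rOut) := (convex_ball _ _).isPreconnected
        have hxb : x ∈ ball x (η (ψ j)).rOut := mem_ball_self hrpos
        by_cases hx : x ∈ E
        · exact hnone (preconn_frontier hpre ⟨x, hxb, hx⟩ ⟨y, hy, fun h => hne (by tauto)⟩)
        · exact hnone (preconn_frontier hpre ⟨y, hy, by tauto⟩ ⟨x, hxb, hx⟩)
      have hux : u (ψ j) x = E.indicator 1 x := by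
        rw [← hw x (mem_ball_self hrpos)]
        apply ContDiffBump.normed_convolution_eq_right
        intro y hy
        rw [hw y hy, hw x (mem_ball_self hrpos)]
        by_cases hx : x ∈ E
        · simp [hx, (hconst y hy).2 hx]
        · have : y ∉ E := fun h => hx ((hconst y hy).1 h)
          simp [hx, this]
      have hab : ‖a (ψ j)‖ < min t (1 - t) := (haτ _).trans (hN _ (hψN j))
      have hp := abs_le.1 (pert_bound (a (ψ j)) x)
      have h1 := hab.trans_le (min_le_left _ _)
      have h2 := hab.trans_le (min_le_right _ _)
      simp only [hv, hux] at hvt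
      by_cases hx : x ∈ E
      · rw [indicator_of_mem hx, Pi.one_apply] at hvt
        linarith [hp.2]
      · rw [indicator_of_notMem hx] at hvt
        linarith [hp.1]
  · rintro ⟨Eh, ε, -, -, -, -, hsup, hlim, -⟩
    exact lt_of_le_of_lt (le_of_tendsto' hlim fun h => le_iSup (fun h => Ps n s (Eh h) Ω) h) hsup
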